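/- arXiv:1810.07761 — 3 statements merged into one kernel-verified Lean document; each statement's English description precedes it below -/
import Mathlib

section
/- Let γ[·] be a random specification on Ω = E^S such that 𝒢(γ[ξ]) ≠ ∅ for ℙ-almost every ξ, and let ξ ↦ μ[ξ] be a random infinite-volume Gibbs measure, i.e. an ℋ–e(𝒫(Ω))-measurable map H → 𝒫(Ω) with μ[ξ] ∈ 𝒢(γ[ξ]) for ℙ-almost every ξ. Then there exist a map w : H → 𝒫(𝒫(Ω)), ξ ↦ w[ξ], and a map π : H × Ω × ℱ → [0,1] such that A ↦ π[ξ](A|ω) is a probability measure on (Ω,ℱ) for every (ξ,ω) and (ξ,ω) ↦ π[ξ](A|ω) is (ℋ⊗ℱ)-measurable for every A ∈ ℱ, with the following properties: (0) w[ξ](M) = μ[ξ]({ω : π[ξ](·|ω) ∈ M}) for every ξ ∈ H and every M ∈ e(𝒫(Ω)); (1) ξ ↦ w[ξ] is ℋ–e(𝒫(𝒫(Ω)))-measurable; (2) for ℙ-almost every ξ, w[ξ]-almost every ν ∈ 𝒫(Ω) belongs to ex 𝒢(γ[ξ]) (i.e. the complement of ex 𝒢(γ[ξ]) is contained in a w[ξ]-null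 set in e(𝒫(Ω))); (3) for ℙ-almost every ξ, μ[ξ] is the barycenter of w[ξ], i.e. μ[ξ](A) = ∫ ν(A) w[ξ](dν) for every A ∈ ℱ. -/
open MeasureTheory Filter Topology
open scoped ENNReal NNReal

namespace GibbsMeta

variable {S E H : Type*}

/-- The sub-σ-algebra `ℱ_Δ` of the product σ-algebra on `Ω = E^S` generated by the
coordinate projections with indices in `Δ ⊆ S`. -/
def cylSigma (S E : Type*) [MeasurableSpace E] (Δ : Set S) : MeasurableSpace (S → E) :=
  ⨆ i ∈ Δ, MeasurableSpace.comap (fun ω : S → E => ω i) inferInstance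

/-- The tail σ-algebra `𝒯 = ⋂_{Λ finite} ℱ_{Λᶜ}`. -/
def tailSigma (S E : Type*) [MeasurableSpace E] : MeasurableSpace (S → E) :=
  ⨅ Λ : Finset S, cylSigma S E ((↑Λ : Set S)ᶜ)

/-- A specification: a family of proper, consistent probability kernels indexed by
finite volumes, with `γ_Λ(A|·)` being `ℱ_{Λᶜ}`-measurable. -/
structure IsSpecification [MeasurableSpace E]
    (γ : Finset S → (S → E) → Measure (S → E)) : Prop where
  prob : ∀ (Λ : Finset S) (ω : S → E), IsProbabilityMeasure (γ Λ ω)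
  meas : ∀ (Λ : Finset S) (A : Set (S → E)), MeasurableSet A →
    Measurable[cylSigma S E ((↑Λ : Set S)ᶜ)] fun ω => γ Λ ω A
  proper : ∀ (Λ : Finset S) (A : Set (S → E)),
    MeasurableSet[cylSigma S E ((↑Λ : Set S)ᶜ)] A →
    ∀ ω, γ Λ ω A = A.indicator (fun _ => (1 : ℝ≥0∞)) ω
  consistent : ∀ (Δ Λ : Finset S), Δ ⊆ Λ → ∀ (A : Set (S → E)), MeasurableSet A →
    ∀ ω, ∫⁻ σ, γ Δ σ A ∂(γ Λ ω) = γ Λ ω A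

/-- The set `𝒢(γ)` of (probability) Gibbs measures for the specification `γ`,
i.e. solutions of the DLR equations. -/
def Gibbs [MeasurableSpace E] (γ : Finset S → (S → E) → Measure (S → E)) :
    Set (Measure (S → E)) :=
  {μ | IsProbabilityMeasure μ ∧
    ∀ (Λ : Finset S) (A : Set (S → E)), MeasurableSet A → ∫⁻ ω, γ Λ ω A ∂μ = μ A}

/-- The set `ex 𝒢(γ)` of extreme points of the convex set `𝒢(γ)`. -/
def exGibbs [MeasurableSpace E] (γ : Finset S → (S → E) → Measure (S → E)) :
    Set (Measure (S → E)) :=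
  {μ | μ ∈ Gibbs γ ∧ ∀ ν₁ ∈ Gibbs γ, ∀ ν₂ ∈ Gibbs γ, ∀ t : ℝ≥0∞, 0 < t → t < 1 →
    μ = t • ν₁ + (1 - t) • ν₂ → ν₁ = μ ∧ ν₂ = μ}

/-- A random specification: a measurable family of specifications. -/
structure IsRandomSpecification [MeasurableSpace E] [MeasurableSpace H]
    (γ : H → Finset S → (S → E) → Measure (S → E)) : Prop where
  spec : ∀ ξ, IsSpecification (γ ξ)
  jointMeas : ∀ (Λ : Finset S) (A : Set (S → E)), MeasurableSet A →
    Measurable fun p : H × (S → E) => γ p.1 Λ p.2 A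

lemma exists_regular_cond_aux {X Ω β : Type*} [MeasurableSpace X] [MeasurableSpace Ω]
    [StandardBorelSpace Ω] [Nonempty Ω] [mB : MeasurableSpace β]
    (P : Measure X) [IsProbabilityMeasure P] (Z : X → β) (hZ : Measurable Z)
    (Y : X → Ω) (hY : Measurable Y) :
    ∃ π : β → Measure Ω, (∀ x, IsProbabilityMeasure (π x)) ∧ Measurable π ∧
      ∀ f : β × Ω → ℝ≥0∞, Measurable f →
        ∫⁻ x, ∫⁻ y, f (Z x, y) ∂(π (Z x)) ∂P = ∫⁻ x, f (Z x, Y x) ∂P := by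
  refine ⟨ProbabilityTheory.condDistrib Y Z P, fun x => inferInstance,
    ProbabilityTheory.Kernel.measurable _, fun f hf => ?_⟩
  have h := ProbabilityTheory.compProd_map_condDistrib (mβ := mB) (X := Z) (μ := P) hY.aemeasurable
  have h1 : ∫⁻ q, f q ∂(P.map fun a => (Z a, Y a)) = ∫⁻ x, f (Z x, Y x) ∂P :=
    lintegral_map hf (hZ.prodMk hY)
  rw [← h1, ← h, Measure.lintegral_compProd hf, lintegral_map _ hZ]
  exact hf.lintegral_kernel_prod_right'

lemma exists_regular_cond {X Ω : Type*} (m : MeasurableSpace X) [mX : MeasurableSpace X] [mΩ : MeasurableSpace Ω]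
    [StandardBorelSpace Ω] [Nonempty Ω]
    (P : Measure X) [IsProbabilityMeasure P] (hm : m ≤ mX)
    (Y : X → Ω) (hY : Measurable Y) :
    ∃ π : X → Measure Ω, (∀ x, IsProbabilityMeasure (π x)) ∧ Measurable[m] π ∧
      ∀ f : X × Ω → ℝ≥0∞, Measurable[m.prod mΩ] f →
        ∫⁻ x, ∫⁻ y, f (x, y) ∂(π x) ∂P = ∫⁻ x, f (x, Y x) ∂P :=
  @exists_regular_cond_aux X Ω X mX mΩ _ _ m P _ id (measurable_id'' hm) Y hY

lemma lintegral_mul_eq_of_set {X : Type*} (m : MeasurableSpace X) [mX : MeasurableSpace X]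
    (P : Measure X) (hm : m ≤ mX) (a b : X → ℝ≥0∞) (ha : Measurable a) (hb : Measurable b)
    (h : ∀ C, MeasurableSet[m] C → ∫⁻ x in C, a x ∂P = ∫⁻ x in C, b x ∂P)
    (f : X → ℝ≥0∞) (hf : Measurable[m] f) :
    ∫⁻ x, f x * a x ∂P = ∫⁻ x, f x * b x ∂P := by
  refine @Measurable.ennreal_induction X m (fun f => ∫⁻ x, f x * a x ∂P = ∫⁻ x, f x * b x ∂P) ?_ ?_ ?_ f hf
  · intro c C hC
    have e : ∀ g : X → ℝ≥0∞, Measurable g →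
        ∫⁻ x, C.indicator (fun _ => c) x * g x ∂P = c * ∫⁻ x in C, g x ∂P := by
      intro g hg
      rw [← lintegral_indicator (hm _ hC), ← lintegral_const_mul _ (hg.indicator (hm _ hC))]
      congr 1; ext x; by_cases hx : x ∈ C <;> simp [hx]
    rw [e a ha, e b hb, h C hC]
  · intro f g _ hf hg h1 h2
    simp only [Pi.add_apply, add_mul]
    rw [lintegral_add_left (f := fun x => f x * a x) ((hf.mono hm le_rfl).mul ha),
      lintegral_add_left (f := fun x => f x * b x) ((hf.mono hm le_rfl).mul hb), h1, h2]
  · intro f hf hmono h1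
    have e : ∀ g : X → ℝ≥0∞, Measurable g →
        ∫⁻ x, (⨆ n, f n) x * g x ∂P = ⨆ n, ∫⁻ x, f n x * g x ∂P := by
      intro g hg
      rw [← lintegral_iSup (f := fun n x => f n x * g x) (fun n => ((hf n).mono hm le_rfl).mul hg)]
      · congr 1; ext x; simp [ENNReal.iSup_mul]
      · intro i j hij x; exact mul_le_mul_left (hmono hij x) _
    simp only [iSup_apply] at e ⊢
    rw [e a ha, e b hb]; simp_rw [h1]

lemma backward_conv {X : Type*} [mX : MeasurableSpace X] (P : Measure X) [IsProbabilityMeasure P]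
    (F : ℕ → MeasurableSpace X) (hF : ∀ n, F n ≤ mX) (anti : Antitone F)
    (a : ℕ → X → ℝ≥0∞) (ha1 : ∀ n x, a n x ≤ 1) (ham : ∀ n, Measurable[F n] (a n))
    (hmart : ∀ n k, n ≤ k → ∀ C, MeasurableSet[F k] C →
      ∫⁻ x in C, a n x ∂P = ∫⁻ x in C, a k x ∂P)
    (p : X → ℝ≥0∞) (hpm : Measurable[⨅ n, F n] p)
    (hp : ∀ n C, MeasurableSet[⨅ n, F n] C → ∫⁻ x in C, a n x ∂P = ∫⁻ x in C, p x ∂P) :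
    ∃ ns : ℕ → ℕ, StrictMono ns ∧ ∀ᵐ x ∂P, Tendsto (fun k => a (ns k) x) atTop (𝓝 (p x)) := by
  have ham' : ∀ n, Measurable (a n) := fun n => (ham n).mono (hF n) le_rfl
  have hfin : ∀ n x, a n x ≠ ∞ := fun n x => ((ha1 n x).trans_lt ENNReal.one_lt_top).ne
  set r : ℕ → X → ℝ := fun n x => (a n x).toReal with hr
  have hrm : ∀ n, Measurable (r n) := fun n => (ham' n).ennreal_toReal
  have hr1 : ∀ n x, ‖r n x‖ ≤ 1 := fun n x => by
    rw [Real.norm_of_nonneg ENNReal.toReal_nonneg]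
    exact ENNReal.toReal_le_of_le_ofReal zero_le_one (by simpa using ha1 n x)
  have hL : ∀ n, MemLp (r n) 2 P := fun n =>
    MemLp.of_bound (hrm n).aestronglyMeasurable 1 (Eventually.of_forall (hr1 n))
  let f : ℕ → Lp ℝ 2 P := fun n => (hL n).toLp
  have hinner : ∀ n k, inner ℝ (f n) (f k) = (∫⁻ x, a k x * a n x ∂P).toReal := by
    intro n k
    rw [L2.inner_def, ← integral_toReal (f := fun x => a k x * a n x) ((ham' k).mul (ham' n)).aemeasurable
      (Eventually.of_forall fun x => ENNReal.mul_lt_top (hfin k x).lt_top (hfin n x).lt_top)]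
    apply integral_congr_ae
    filter_upwards [(hL n).coeFn_toLp, (hL k).coeFn_toLp] with x h1 h2
    simp only [f, h1, h2]
    simp [hr, ENNReal.toReal_mul]
  have hproj : ∀ n k, n ≤ k → inner ℝ (f n) (f k) = ‖f k‖ ^ 2 := by
    intro n k hnk
    rw [← real_inner_self_eq_norm_sq, hinner, hinner,
      lintegral_mul_eq_of_set (F k) P (hF k) _ _ (ham' n) (ham' k) (hmart n k hnk) _ (ham k)]
  have hdiff : ∀ n k, n ≤ k → ‖f n - f k‖ ^ 2 = ‖f n‖ ^ 2 - ‖f k‖ ^ 2 := by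
    intro n k hnk
    rw [norm_sub_sq_real, hproj n k hnk]; ring
  have hanti : Antitone fun n => ‖f n‖ ^ 2 := by
    intro n k hnk
    have := hdiff n k hnk
    have h2 := sq_nonneg ‖f n - f k‖
    simp only; linarith
  have hconv := tendsto_atTop_ciInf hanti ⟨0, by rintro _ ⟨n, rfl⟩; positivity⟩
  have hcau : CauchySeq f := by
    have hc := hconv.cauchySeq
    rw [Metric.cauchySeq_iff'] at hc ⊢
    intro ε hε
    obtain ⟨N, hN⟩ := hc (ε ^ 2) (by positivity)
    refine ⟨N, fun n hn => ?_⟩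
    have h1 := hN n hn
    rw [Real.dist_eq, abs_sub_comm] at h1
    rw [dist_comm, dist_eq_norm]
    have h2 := hdiff N n hn
    refine lt_of_pow_lt_pow_left₀ 2 hε.le ?_
    rw [h2]; exact (le_abs_self _).trans_lt h1
  obtain ⟨g, hg⟩ := cauchySeq_tendsto_of_complete hcau
  obtain ⟨ns, hns, hae⟩ := (tendstoInMeasure_of_tendsto_Lp hg).exists_seq_tendsto_ae
  refine ⟨ns, hns, ?_⟩
  have hall : ∀ᵐ x ∂P, ∀ n, f n x = r n x := ae_all_iff.2 fun n => (hL n).coeFn_toLp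
  have hlim : ∀ᵐ x ∂P, Tendsto (fun k => a (ns k) x) atTop
      (𝓝 (limsup (fun k => a (ns k) x) atTop)) := by
    filter_upwards [hae, hall] with x hx hx2
    have : Tendsto (fun k => ENNReal.ofReal (f (ns k) x)) atTop (𝓝 (ENNReal.ofReal (g x))) :=
      (ENNReal.continuous_ofReal.tendsto _).comp hx
    simp only [hx2, hr, ENNReal.ofReal_toReal (hfin _ _)] at this
    rwa [this.limsup_eq]
  set l : X → ℝ≥0∞ := fun x => limsup (fun k => a (ns k) x) atTop with hl
  have hlm : Measurable[⨅ n, F n] l := by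
    intro s hs
    rw [MeasurableSpace.measurableSet_iInf]
    intro N
    have : l = fun x => limsup (fun k => a (ns (k + N)) x) atTop := by
      ext x; exact (limsup_nat_add (fun k => a (ns k) x) N).symm
    rw [this]
    refine (Measurable.limsup (mδ := F N) fun k => ?_) hs
    exact (ham _).mono (anti (le_trans (Nat.le_add_left N k) hns.le_apply)) le_rfl
  have hm : (⨅ n, F n) ≤ mX := (iInf_le _ 0).trans (hF 0)
  have hlp : l =ᵐ[P] p := by
    have : l =ᵐ[P.trim hm] p := by
      refine @ae_eq_of_forall_setLIntegral_eq_of_sigmaFinite X (⨅ n, F n) (P.trim hm) _ _ _ hlm hpm ?_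
      intro C hC _
      rw [setLIntegral_trim hm hlm hC, setLIntegral_trim hm hpm hC]
      have h1 : Tendsto (fun k => ∫⁻ x in C, a (ns k) x ∂P) atTop (𝓝 (∫⁻ x in C, l x ∂P)) := by
        refine tendsto_lintegral_of_dominated_convergence (fun _ => 1) (fun k => ham' _)
          (fun k => Eventually.of_forall (ha1 _)) (by simp) (ae_restrict_of_ae hlim)
      simp only [hp _ C hC] at h1
      exact tendsto_nhds_unique h1 tendsto_const_nhds
    exact ae_eq_of_ae_eq_trim this
  filter_upwards [hlim, hlp] with x h1 h2
  rwa [← h2]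

lemma cyl_le (Δ : Set S) [mE : MeasurableSpace E] :
    cylSigma S E Δ ≤ MeasurableSpace.pi := by
  refine iSup₂_le fun i _ => ?_
  exact (measurable_pi_apply i).comap_le

lemma cyl_anti [MeasurableSpace E] {Δ Δ' : Set S} (h : Δ ⊆ Δ') :
    cylSigma S E Δ ≤ cylSigma S E Δ' := by
  refine iSup₂_le fun i hi => ?_
  exact le_iSup₂_of_le i (h hi) le_rfl

open Classical in
/-- replace the configuration outside `Δ` by the reference configuration `o`. -/
noncomputable def modif (Δ : Set S) (o : S → E) (ω : S → E) : S → E :=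
  fun i => if i ∈ Δ then ω i else o i

lemma modif_meas [MeasurableSpace E] (Δ : Set S) (o : S → E) :
    Measurable[cylSigma S E Δ] (modif Δ o) := by
  refine @measurable_pi_lambda _ _ _ (cylSigma S E Δ) _ _ fun i => ?_
  by_cases hi : i ∈ Δ
  · simp only [modif, hi, if_true]
    intro s hs
    have h : MeasurableSpace.comap (fun ω : S → E => ω i) inferInstance ≤ cylSigma S E Δ :=
      le_iSup₂_of_le i hi le_rfl
    exact h _ ⟨s, hs, rfl⟩
  · simp only [modif, hi, if_false]
    exact measurable_const

lemma cyl_le_comap [MeasurableSpace E] (Δ : Set S) (o : S → E) :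
    cylSigma S E Δ ≤ MeasurableSpace.comap (modif Δ o) MeasurableSpace.pi := by
  refine iSup₂_le fun i hi => ?_
  rintro _ ⟨s, hs, rfl⟩
  refine ⟨(fun ω => ω i) ⁻¹' s, measurable_pi_apply i hs, ?_⟩
  ext ω
  simp [modif, hi]

lemma modif_modif (Δ : Set S) (o ω : S → E) : modif Δ o (modif Δ o ω) = modif Δ o ω := by
  ext i; by_cases hi : i ∈ Δ <;> simp [modif, hi]

lemma apply_modif [MeasurableSpace E] (Δ : Set S) (o : S → E) (f : (S → E) → ℝ≥0∞)
    (hf : Measurable[cylSigma S E Δ] f) (ω : S → E) : f (modif Δ o ω) = f ω := by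
  obtain ⟨T, -, hT⟩ := cyl_le_comap Δ o _ (hf (measurableSet_singleton (f ω)))
  have h1 : ω ∈ modif Δ o ⁻¹' T := by rw [hT]; simp
  have h2 : modif Δ o ω ∈ modif Δ o ⁻¹' T := by
    rw [Set.mem_preimage, modif_modif]; exact h1
  rw [hT] at h2
  exact h2

lemma spec_jointMeas [MeasurableSpace E] [mH : MeasurableSpace H]
    {γ : H → Finset S → (S → E) → Measure (S → E)}
    (hγ : IsRandomSpecification γ) (o : S → E) (Λ : Finset S) (A : Set (S → E))
    (hA : MeasurableSet A) :
    Measurable[mH.prod (cylSigma S E ((↑Λ : Set S)ᶜ))]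
      fun p : H × (S → E) => γ p.1 Λ p.2 A := by
  have h : (fun p : H × (S → E) => γ p.1 Λ p.2 A) =
      (fun p : H × (S → E) => γ p.1 Λ p.2 A) ∘
        fun p => (p.1, modif ((↑Λ : Set S)ᶜ) o p.2) := by
    ext p
    exact (apply_modif _ o (fun ω => γ p.1 Λ ω A) ((hγ.spec p.1).meas Λ A hA) p.2).symm
  rw [h]
  refine (hγ.jointMeas Λ A hA).comp ?_
  exact (@measurable_fst _ _ mH (cylSigma S E ((↑Λ : Set S)ᶜ))).prodMk
    ((modif_meas _ o).comp (@measurable_snd _ _ mH (cylSigma S E ((↑Λ : Set S)ᶜ))))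

lemma spec_inter [MeasurableSpace E] {γ : Finset S → (S → E) → Measure (S → E)}
    (hγ : IsSpecification γ) (Λ : Finset S) (A B : Set (S → E))
    (hB : MeasurableSet[cylSigma S E ((↑Λ : Set S)ᶜ)] B) (ω : S → E) :
    γ Λ ω (A ∩ B) = B.indicator (fun ω => γ Λ ω A) ω := by
  by_cases hω : ω ∈ B
  · rw [Set.indicator_of_mem hω]
    refine measure_inter_conull ?_
    rw [hγ.proper Λ _ hB.compl]; simp [hω]
  · rw [Set.indicator_of_notMem hω]
    refine measure_mono_null Set.inter_subset_right ?_
    rw [hγ.proper Λ _ hB]; simp [hω]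

lemma gibbs_cond [MeasurableSpace E] {γ : Finset S → (S → E) → Measure (S → E)}
    (hγ : IsSpecification γ) {μ : Measure (S → E)} (hμ : μ ∈ Gibbs γ) (Λ : Finset S)
    (A B : Set (S → E)) (hA : MeasurableSet A)
    (hB : MeasurableSet[cylSigma S E ((↑Λ : Set S)ᶜ)] B) :
    ∫⁻ ω, B.indicator (fun ω => γ Λ ω A) ω ∂μ = μ (A ∩ B) := by
  rw [← hμ.2 Λ (A ∩ B) (hA.inter (cyl_le _ _ hB))]
  simp_rw [spec_inter hγ Λ A B hB]

lemma spec_measurable [MeasurableSpace E] {γ : Finset S → (S → E) → Measure (S → E)}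
    (hγ : IsSpecification γ) (Λ : Finset S) : Measurable (γ Λ) :=
  Measure.measurable_of_measurable_coe _ fun A hA => (hγ.meas Λ A hA).mono (cyl_le _) le_rfl

/-- A set of good measures, contained in the extreme Gibbs measures. -/
def Good [MeasurableSpace E] (𝒜 : Set (Set (S → E))) (L : ℕ → Finset S)
    (ns : Set (S → E) → ℕ → ℕ) (γ : Finset S → (S → E) → Measure (S → E)) :
    Set (Measure (S → E)) :=
  {ν | ν Set.univ = 1 ∧ (∀ Λ, ∀ A ∈ 𝒜, ∫⁻ σ, γ Λ σ A ∂ν = ν A) ∧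
    ∀ A ∈ 𝒜, ∀ᵐ σ ∂ν, Tendsto (fun k => γ (L (ns A k)) σ A) atTop (𝓝 (ν A))}

lemma good_subset [mE : MeasurableSpace E] (𝒜 : Set (Set (S → E)))
    (hgen : (MeasurableSpace.pi : MeasurableSpace (S → E)) = MeasurableSpace.generateFrom 𝒜)
    (hpi : IsPiSystem 𝒜)
    (h𝒜 : ∀ A ∈ 𝒜, MeasurableSet A) (L : ℕ → Finset S) (ns : Set (S → E) → ℕ → ℕ)
    (γ : Finset S → (S → E) → Measure (S → E)) (hγ : IsSpecification γ) :
    Good 𝒜 L ns γ ⊆ exGibbs γ := by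
  rintro ν ⟨hν1, hνG, hνt⟩
  have hprob : IsProbabilityMeasure ν := ⟨hν1⟩
  have := hγ.prob
  have hG : ν ∈ Gibbs γ := by
    refine ⟨hprob, fun Λ A hA => ?_⟩
    have hb : ∀ A, MeasurableSet A → ν.bind (γ Λ) A = ∫⁻ σ, γ Λ σ A ∂ν := fun A hA =>
      Measure.bind_apply hA (spec_measurable hγ Λ).aemeasurable
    have : ν.bind (γ Λ) = ν := by
      symm
      refine ext_of_generate_finite 𝒜 hgen hpi (fun A hA => ?_) ?_
      · rw [hb A (h𝒜 A hA), hνG Λ A hA]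
      · rw [hb _ MeasurableSet.univ]; simp
    rw [← hb A hA, this]
  have key : ∀ ν₁ ∈ Gibbs γ, ν₁ ≪ ν → ν₁ = ν := by
    intro ν₁ h1 hac
    have := h1.1
    refine ext_of_generate_finite 𝒜 hgen hpi (fun A hA => ?_) (by simp)
    have ht : Tendsto (fun k => ∫⁻ σ, γ (L (ns A k)) σ A ∂ν₁) atTop (𝓝 (∫⁻ _, ν A ∂ν₁)) := by
      refine tendsto_lintegral_of_dominated_convergence (fun _ => 1)
        (fun k => (hγ.meas _ A (h𝒜 A hA)).mono (cyl_le _) le_rfl)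
        (fun k => Eventually.of_forall fun σ => prob_le_one) (by simp) (hac.ae_le (hνt A hA))
    simp only [h1.2 _ A (h𝒜 A hA), lintegral_const, measure_univ, mul_one] at ht
    exact tendsto_nhds_unique tendsto_const_nhds ht
  refine ⟨hG, fun ν₁ h1 ν₂ h2 t ht0 ht1 heq => ⟨key ν₁ h1 ?_, key ν₂ h2 ?_⟩⟩
  · intro A hA
    rw [heq] at hA
    simp only [Measure.coe_add, Measure.coe_smul, Pi.add_apply, Pi.smul_apply, smul_eq_mul,
      add_eq_zero, mul_eq_zero] at hA
    exact hA.1.resolve_left ht0.ne'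
  · intro A hA
    rw [heq] at hA
    simp only [Measure.coe_add, Measure.coe_smul, Pi.add_apply, Pi.smul_apply, smul_eq_mul,
      add_eq_zero, mul_eq_zero] at hA
    exact hA.2.resolve_left (tsub_pos_of_lt ht1).ne'

lemma meas_ae {Ω : Type*} [MeasurableSpace Ω] (T : Set (Measure Ω × Ω)) (hT : MeasurableSet T) :
    MeasurableSet {ν : Measure Ω | ν Set.univ = 1 ∧ ∀ᵐ σ ∂ν, (ν, σ) ∈ T} := by
  have hU : MeasurableSet {ν : Measure Ω | ν Set.univ = 1} :=
    (Measure.measurable_coe MeasurableSet.univ) (measurableSet_singleton 1)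
  classical
  let κ : ProbabilityTheory.Kernel (Measure Ω) Ω :=
    ProbabilityTheory.Kernel.piecewise hU ⟨id, measurable_id⟩ 0
  have : ProbabilityTheory.IsFiniteKernel κ := by
    refine ⟨1, ENNReal.one_lt_top, fun ν => ?_⟩
    simp only [κ, ProbabilityTheory.Kernel.piecewise_apply]
    split_ifs with h
    · exact le_of_eq h
    · simp
  have hm := ProbabilityTheory.Kernel.measurable_kernel_prodMk_left (κ := κ) hT.compl
  have : {ν : Measure Ω | ν Set.univ = 1 ∧ ∀ᵐ σ ∂ν, (ν, σ) ∈ T} =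
      {ν : Measure Ω | ν Set.univ = 1} ∩ {ν | κ ν (Prod.mk ν ⁻¹' Tᶜ) = 0} := by
    ext ν
    simp only [Set.mem_ofPred_eq, Set.mem_inter_iff]
    refine and_congr_right fun h => ?_
    have : κ ν = ν := by
      simp only [κ, ProbabilityTheory.Kernel.piecewise_apply, Set.mem_ofPred_eq, h, if_true]
      rfl
    rw [this]; rfl
  rw [this]
  exact hU.inter (hm (measurableSet_singleton 0))

lemma good_meas [Countable S] [mE : MeasurableSpace E] (𝒜 : Set (Set (S → E)))
    (hc : 𝒜.Countable)
    (h𝒜 : ∀ A ∈ 𝒜, MeasurableSet A) (L : ℕ → Finset S) (ns : Set (S → E) → ℕ → ℕ)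
    (γ : Finset S → (S → E) → Measure (S → E)) (hγ : IsSpecification γ) :
    MeasurableSet (Good 𝒜 L ns γ) := by
  have hU : MeasurableSet {ν : Measure (S → E) | ν Set.univ = 1} :=
    (Measure.measurable_coe MeasurableSet.univ) (measurableSet_singleton 1)
  have hmeas : ∀ Λ, ∀ A ∈ 𝒜, Measurable fun ω => γ Λ ω A := fun Λ A hA =>
    (hγ.meas _ A (h𝒜 A hA)).mono (cyl_le _) le_rfl
  have : Good 𝒜 L ns γ = {ν | ν Set.univ = 1} ∩
      ((⋂ Λ, ⋂ A ∈ 𝒜, {ν | ∫⁻ σ, γ Λ σ A ∂ν = ν A}) ∩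
      ⋂ A ∈ 𝒜, {ν | ν Set.univ = 1 ∧ ∀ᵐ σ ∂ν, (ν, σ) ∈ {q : Measure (S → E) × (S → E) |
        Tendsto (fun k => γ (L (ns A k)) q.2 A) atTop (𝓝 (q.1 A))}}) := by
    ext ν
    simp only [Good, Set.mem_inter_iff, Set.mem_iInter, Set.mem_ofPred_eq]
    constructor
    · rintro ⟨h1, h2, h3⟩; exact ⟨h1, h2, fun A hA => ⟨h1, h3 A hA⟩⟩
    · rintro ⟨h1, h2, h3⟩; exact ⟨h1, h2, fun A hA => (h3 A hA).2⟩
  rw [this]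
  refine hU.inter (MeasurableSet.inter ?_ ?_)
  · refine MeasurableSet.iInter fun Λ => MeasurableSet.biInter hc fun A hA => ?_
    exact measurableSet_eq_fun (Measure.measurable_lintegral (hmeas Λ A hA))
      (Measure.measurable_coe (h𝒜 A hA))
  · refine MeasurableSet.biInter hc fun A hA => meas_ae _ ?_
    exact measurableSet_tendsto_fun (fun k => (hmeas _ A hA).comp measurable_snd)
      ((Measure.measurable_coe (h𝒜 A hA)).comp measurable_fst)

lemma exists_countable_pi (Ω : Type*) [m : MeasurableSpace Ω] [MeasurableSpace.CountablyGenerated Ω] :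
    ∃ 𝒜 : Set (Set Ω), 𝒜.Countable ∧ m = MeasurableSpace.generateFrom 𝒜 ∧ IsPiSystem 𝒜 := by
  obtain ⟨b, hb, hgen⟩ := MeasurableSpace.CountablyGenerated.isCountablyGenerated (α := Ω)
  refine ⟨generateSetAlgebra b, countable_generateSetAlgebra hb, ?_, ?_⟩
  · rw [generateFrom_generateSetAlgebra_eq, hgen]
  · exact (isSetAlgebra_generateSetAlgebra).isSetRing.isSetSemiring.isPiSystem

/-- **Theorem 1 (extremal decomposition for random Gibbs measures).**
Given a random specification `γ` with `𝒢(γ[ξ]) ≠ ∅` for `ℙ`-a.e. `ξ` and a measurable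
random Gibbs measure `ξ ↦ μ[ξ]`, there are a weight map `w : H → 𝒫(𝒫(Ω))` and a
kernel `π` such that `w[ξ]` is the image of `μ[ξ]` under `ω ↦ π[ξ](·|ω)`, the map
`ξ ↦ w[ξ]` is measurable, for a.e. `ξ` the measure `w[ξ]` is supported on
`ex 𝒢(γ[ξ])`, and `μ[ξ]` is the barycenter of `w[ξ]`. -/
theorem extremal_decomposition_of_random_Gibbs_measure
    [Countable S] [MeasurableSpace E] [StandardBorelSpace E] [MeasurableSpace H]
    (ℙ : Measure H) [IsProbabilityMeasure ℙ]
    (γ : H → Finset S → (S → E) → Measure (S → E))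
    (hγ : IsRandomSpecification γ)
    (hGnonempty : ∀ᵐ ξ ∂ℙ, (Gibbs (γ ξ)).Nonempty)
    (μ : H → Measure (S → E))
    (hμmeas : Measurable μ)
    (hμprob : ∀ ξ, IsProbabilityMeasure (μ ξ))
    (hμGibbs : ∀ᵐ ξ ∂ℙ, μ ξ ∈ Gibbs (γ ξ)) :
    ∃ (w : H → Measure (Measure (S → E))) (π : H → (S → E) → Measure (S → E)),
      -- `π` is a probability kernel, jointly measurable in `(ξ, ω)`
      (∀ ξ ω, IsProbabilityMeasure (π ξ ω)) ∧
      (∀ A : Set (S → E), MeasurableSet A →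
        Measurable fun p : H × (S → E) => π p.1 p.2 A) ∧
      -- (0) `w[ξ]` is the image of `μ[ξ]` under `ω ↦ π[ξ](·|ω)`
      (∀ ξ, IsProbabilityMeasure (w ξ)) ∧
      (∀ ξ, ∀ M : Set (Measure (S → E)), MeasurableSet M →
        w ξ M = μ ξ {ω | π ξ ω ∈ M}) ∧
      -- (1) `ξ ↦ w[ξ]` is `ℋ – e(𝒫(𝒫(Ω)))` measurable
      Measurable w ∧
      -- (2) for a.e. `ξ`, `w[ξ]`-a.e. `ν` is an extreme Gibbs measure
      (∀ᵐ ξ ∂ℙ, ∃ N : Set (Measure (S → E)), MeasurableSet N ∧ w ξ N = 0 ∧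
        (exGibbs (γ ξ))ᶜ ⊆ N) ∧
      -- (3) for a.e. `ξ`, `μ[ξ]` is the barycenter of `w[ξ]`
      (∀ᵐ ξ ∂ℙ, ∀ A : Set (S → E), MeasurableSet A →
        μ ξ A = ∫⁻ ν, ν A ∂(w ξ)) := by
  classical
  have hH : Nonempty H := nonempty_of_isProbabilityMeasure ℙ
  have hΩ : Nonempty (S → E) := by
    obtain ⟨ξ0⟩ := hH
    exact nonempty_of_isProbabilityMeasure (μ ξ0)
  obtain ⟨o⟩ := id hΩ
  let κ : ProbabilityTheory.Kernel H (S → E) := ⟨μ, hμmeas⟩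
  have hκ : ∀ ξ, κ ξ = μ ξ := fun ξ => rfl
  have hκM : ProbabilityTheory.IsMarkovKernel κ := ⟨hμprob⟩
  obtain ⟨𝒜, hc, hgen, hpi⟩ := exists_countable_pi (S → E)
  have h𝒜 : ∀ A ∈ 𝒜, MeasurableSet A := fun A hA => by
    rw [hgen]; exact MeasurableSpace.measurableSet_generateFrom hA
  obtain ⟨L, hLmono, hLtop⟩ := exists_seq_monotone_tendsto_atTop_atTop (Finset S)
  have hprob := fun ξ => (hγ.spec ξ).prob
  obtain ⟨P, hP⟩ : ∃ P : Measure (H × (S → E)), P = ℙ.compProd κ := ⟨_, rfl⟩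
  have hPprob : IsProbabilityMeasure P := by rw [hP]; infer_instance
  have hFle : ∀ Λ : Finset S, (inferInstance : MeasurableSpace H).prod
      (cylSigma S E ((↑Λ : Set S)ᶜ)) ≤ (inferInstance : MeasurableSpace (H × (S → E))) :=
    fun Λ => sup_le_sup le_rfl (MeasurableSpace.comap_mono (cyl_le _))
  have hFanti : ∀ Λ Δ : Finset S, Λ ⊆ Δ → (inferInstance : MeasurableSpace H).prod
      (cylSigma S E ((↑Δ : Set S)ᶜ)) ≤ (inferInstance : MeasurableSpace H).prod
      (cylSigma S E ((↑Λ : Set S)ᶜ)) :=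
    fun Λ Δ h => sup_le_sup le_rfl (MeasurableSpace.comap_mono
      (cyl_anti (Set.compl_subset_compl.2 (Finset.coe_subset.2 h))))
  have hcondP : ∀ (Λ : Finset S) (A : Set (S → E)), MeasurableSet A → ∀ C,
      MeasurableSet[(inferInstance : MeasurableSpace H).prod (cylSigma S E ((↑Λ : Set S)ᶜ))] C →
      ∫⁻ x in C, γ x.1 Λ x.2 A ∂P = P (C ∩ Prod.snd ⁻¹' A) := by
    intro Λ A hA C hC
    have hC' := hFle Λ C hC
    rw [← lintegral_indicator hC', hP,
      Measure.lintegral_compProd ((hγ.jointMeas Λ A hA).indicator hC'),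
      Measure.compProd_apply (hC'.inter (measurable_snd hA))]
    refine lintegral_congr_ae ?_
    filter_upwards [hμGibbs] with ξ hξ
    have hsec : MeasurableSet[cylSigma S E ((↑Λ : Set S)ᶜ)] (Prod.mk ξ ⁻¹' C) :=
      (@measurable_prodMk_left _ _ _ (cylSigma S E ((↑Λ : Set S)ᶜ)) ξ) hC
    have h := gibbs_cond (hγ.spec ξ) hξ Λ A _ hA hsec
    rw [hκ]
    have e : Prod.mk ξ ⁻¹' (C ∩ Prod.snd ⁻¹' A) = A ∩ Prod.mk ξ ⁻¹' C := by
      ext ω; simp [and_comm]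
    rw [e, ← h]
    refine lintegral_congr fun ω => ?_
    by_cases hω : (ξ, ω) ∈ C <;> simp [hω]
  obtain ⟨F, hF⟩ : ∃ F : ℕ → MeasurableSpace (H × (S → E)), F = fun n =>
    (inferInstance : MeasurableSpace H).prod (cylSigma S E ((↑(L n) : Set S)ᶜ)) := ⟨_, rfl⟩
  have hFn : ∀ n, F n ≤ (inferInstance : MeasurableSpace (H × (S → E))) := by
    rw [hF]; exact fun n => hFle _
  have hmle : (⨅ n, F n) ≤ (inferInstance : MeasurableSpace (H × (S → E))) :=
    (iInf_le _ 0).trans (hFn 0)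
  have hmF : ∀ Λ : Finset S, (⨅ n, F n) ≤ (inferInstance : MeasurableSpace H).prod
      (cylSigma S E ((↑Λ : Set S)ᶜ)) := by
    intro Λ
    obtain ⟨n, hn⟩ := (hLtop.eventually_ge_atTop Λ).exists
    refine (iInf_le _ n).trans ?_
    rw [hF]; exact hFanti _ _ hn
  have hfst : Measurable[⨅ n, F n] (Prod.fst : H × (S → E) → H) := by
    intro s hs
    rw [MeasurableSpace.measurableSet_iInf]
    intro n
    rw [hF]
    exact (@measurable_fst _ _ _ (cylSigma S E ((↑(L n) : Set S)ᶜ))) hs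
  obtain ⟨π, hπ1, hπm, hπd⟩ := exists_regular_cond (⨅ n, F n) P hmle Prod.snd measurable_snd
  have hπm' : Measurable π := hπm.mono hmle le_rfl
  have hπA : ∀ A, MeasurableSet A → Measurable[⨅ n, F n] fun x => π x A := fun A hA =>
    (Measure.measurable_coe hA).comp hπm
  -- set-integrals of `π`
  have hπset : ∀ A, MeasurableSet A → ∀ C, MeasurableSet[⨅ n, F n] C →
      ∫⁻ x in C, π x A ∂P = P (C ∩ Prod.snd ⁻¹' A) := by
    intro A hA C hC
    have h := hπd ((C ×ˢ A).indicator fun _ => 1)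
      ((@measurable_const _ _ _ ((⨅ n, F n).prod _) _).indicator
        (@MeasurableSet.prod _ _ (⨅ n, F n) _ _ _ hC hA))
    have e1 : ∀ x : H × (S → E), (C ×ˢ A).indicator (fun _ => (1 : ℝ≥0∞)) (x, x.2) =
        (C ∩ Prod.snd ⁻¹' A).indicator 1 x := by
      intro x; simp [Set.indicator]
    have e2 : ∀ x : H × (S → E), ∫⁻ y, (C ×ˢ A).indicator (fun _ => (1 : ℝ≥0∞)) (x, y) ∂(π x) =
        C.indicator (fun x => π x A) x := by
      intro x
      by_cases hx : x ∈ C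
      · rw [Set.indicator_of_mem hx, ← lintegral_indicator_one hA]
        refine lintegral_congr fun y => ?_
        simp [Set.indicator, hx]
      · simp [Set.indicator, hx]
    simp only [e1, e2] at h
    rw [lintegral_indicator (hmle _ hC),
      lintegral_indicator_one ((hmle _ hC).inter (measurable_snd hA))] at h
    exact h
  have hjm : ∀ Λ A, MeasurableSet A → Measurable[(⨅ n, F n).prod MeasurableSpace.pi]
      fun z : (H × (S → E)) × (S → E) => γ z.1.1 Λ z.2 A := by
    intro Λ A hA
    exact (hγ.jointMeas Λ A hA).comp
      ((hfst.comp (@measurable_fst _ _ (⨅ n, F n) _)).prodMk (@measurable_snd _ _ (⨅ n, F n) _))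
  -- the Gibbs property
  have hGibbs : ∀ Λ, ∀ A ∈ 𝒜, ∀ᵐ x ∂P, ∫⁻ σ, γ x.1 Λ σ A ∂(π x) = π x A := by
    intro Λ A hA
    have hA' := h𝒜 A hA
    have hhm : Measurable[⨅ n, F n] fun x => ∫⁻ σ, γ x.1 Λ σ A ∂(π x) := by
      let K : @ProbabilityTheory.Kernel (H × (S → E)) (S → E) (⨅ n, F n) _ :=
        @ProbabilityTheory.Kernel.mk _ _ (⨅ n, F n) _ π hπm
      have hK : @ProbabilityTheory.IsMarkovKernel _ _ (⨅ n, F n) _ K :=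
        @ProbabilityTheory.IsMarkovKernel.mk _ _ (⨅ n, F n) _ K hπ1
      exact @Measurable.lintegral_kernel_prod_right' _ _ (⨅ n, F n) _ K _ _ (hjm Λ A hA')
    refine ae_eq_of_ae_eq_trim (hm := hmle) ?_
    refine @ae_eq_of_forall_setLIntegral_eq_of_sigmaFinite _ (⨅ n, F n) (P.trim hmle) _ _ _
      hhm (hπA A hA') ?_
    intro C hC _
    rw [setLIntegral_trim hmle hhm hC, setLIntegral_trim hmle (hπA A hA') hC, hπset A hA' C hC,
      ← hcondP Λ A hA' C (hmF Λ _ hC)]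
    have h := hπd ((Prod.fst ⁻¹' C).indicator fun z => γ z.1.1 Λ z.2 A)
      ((hjm Λ A hA').indicator ((@measurable_fst _ _ (⨅ n, F n) _) hC))
    rw [← lintegral_indicator (hmle _ hC), ← lintegral_indicator (hmle _ hC)]
    refine Eq.trans (lintegral_congr fun x => ?_) (h.trans (lintegral_congr fun x => ?_))
    · by_cases hx : x ∈ C <;> simp [hx]
    · by_cases hx : x ∈ C <;> simp [hx]
  -- the limit property
  have hconv : ∀ A, ∃ ns : ℕ → ℕ, A ∈ 𝒜 →
      ∀ᵐ x ∂P, Tendsto (fun k => γ x.1 (L (ns k)) x.2 A) atTop (𝓝 (π x A)) := by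
    intro A
    by_cases hA : A ∈ 𝒜
    swap
    · exact ⟨id, fun h => absurd h hA⟩
    have hA' := h𝒜 A hA
    have hs : ∀ n C, MeasurableSet[F n] C →
        ∫⁻ x in C, γ x.1 (L n) x.2 A ∂P = P (C ∩ Prod.snd ⁻¹' A) := by
      intro n C hC
      rw [hF] at hC
      exact hcondP (L n) A hA' C hC
    have hanti : Antitone F := by
      rw [hF]; exact fun n k hnk => hFanti _ _ (hLmono hnk)
    obtain ⟨ns, -, h⟩ := backward_conv P F hFn hanti (fun n x => γ x.1 (L n) x.2 A)
      (fun n x => prob_le_one)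
      (by rw [hF]; exact fun n => spec_jointMeas hγ o (L n) A hA')
      (fun n k hnk C hC => by rw [hs n C (hanti hnk _ hC), hs k C hC])
      (fun x => π x A) (hπA A hA')
      (fun n C hC => by rw [hs n C (iInf_le F n _ hC), hπset A hA' C hC])
    exact ⟨ns, fun _ => h⟩
  choose ns hns using hconv
  have hlim : ∀ A ∈ 𝒜, ∀ᵐ x ∂P, ∀ᵐ σ ∂(π x),
      Tendsto (fun k => γ x.1 (L (ns A k)) σ A) atTop (𝓝 (π x A)) := by
    intro A hA
    have hA' := h𝒜 A hA
    have hT : MeasurableSet[(⨅ n, F n).prod MeasurableSpace.pi]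
        {z : (H × (S → E)) × (S → E) |
          Tendsto (fun k => γ z.1.1 (L (ns A k)) z.2 A) atTop (𝓝 (π z.1 A))} :=
      @measurableSet_tendsto_fun ℕ ℝ≥0∞ _ ((⨅ n, F n).prod MeasurableSpace.pi) _ _ _ _ _ _ _ _ _
        (fun k => hjm _ A hA') _ ((hπA A hA').comp (@measurable_fst _ _ (⨅ n, F n) _))
    have hT' : MeasurableSet
        {z : (H × (S → E)) × (S → E) |
          Tendsto (fun k => γ z.1.1 (L (ns A k)) z.2 A) atTop (𝓝 (π z.1 A))} :=
      (sup_le_sup (MeasurableSpace.comap_mono hmle) le_rfl :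
        (⨅ n, F n).prod MeasurableSpace.pi ≤ _) _ hT
    have h := hπd ({z : (H × (S → E)) × (S → E) |
          Tendsto (fun k => γ z.1.1 (L (ns A k)) z.2 A) atTop (𝓝 (π z.1 A))}ᶜ.indicator
          fun _ => 1)
      ((@measurable_const _ _ _ ((⨅ n, F n).prod _) _).indicator hT.compl)
    have hz : ∫⁻ x, {z : (H × (S → E)) × (S → E) |
          Tendsto (fun k => γ z.1.1 (L (ns A k)) z.2 A) atTop (𝓝 (π z.1 A))}ᶜ.indicator
          (fun _ => (1 : ℝ≥0∞)) (x, x.2) ∂P = 0 := by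
      rw [← lintegral_zero (μ := P)]
      refine lintegral_congr_ae ?_
      filter_upwards [hns A hA] with x hx
      exact Set.indicator_of_notMem (by simpa using hx) _
    rw [hz] at h
    let K : ProbabilityTheory.Kernel (H × (S → E)) (S → E) := ⟨π, hπm'⟩
    have hK : ProbabilityTheory.IsMarkovKernel K := ⟨hπ1⟩
    have hind : Measurable ({z : (H × (S → E)) × (S → E) |
          Tendsto (fun k => γ z.1.1 (L (ns A k)) z.2 A) atTop (𝓝 (π z.1 A))}ᶜ.indicator
          fun _ => (1 : ℝ≥0∞)) := measurable_const.indicator hT'.compl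
    have hintm := hind.lintegral_kernel_prod_right' (κ := K)
    replace h := (lintegral_eq_zero_iff hintm).1 h
    filter_upwards [h] with x hx
    have hx2 := (lintegral_eq_zero_iff (hind.comp measurable_prodMk_left)).1 hx
    filter_upwards [hx2] with σ hσ
    by_contra hcon
    simp [Set.indicator, hcon] at hσ
  have hgood : ∀ᵐ x ∂P, π x ∈ Good 𝒜 L ns (γ x.1) := by
    have h1 : ∀ᵐ x ∂P, ∀ Λ, ∀ A ∈ 𝒜, ∫⁻ σ, γ x.1 Λ σ A ∂(π x) = π x A :=
      ae_all_iff.2 fun Λ => (ae_ball_iff hc).2 fun A hA => hGibbs Λ A hA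
    have h2 := (ae_ball_iff hc).2 hlim
    filter_upwards [h1, h2] with x hx1 hx2
    exact ⟨measure_univ, hx1, hx2⟩
  have hgood' : ∀ᵐ ξ ∂ℙ, ∀ᵐ ω ∂(μ ξ), π (ξ, ω) ∈ Good 𝒜 L ns (γ ξ) := by
    rw [hP] at hgood
    exact Measure.ae_ae_of_ae_compProd hgood
  have hπξ : ∀ ξ, Measurable fun ω => π (ξ, ω) := fun ξ => hπm'.comp measurable_prodMk_left
  have hw : ∀ ξ, ∀ M : Set (Measure (S → E)), MeasurableSet M →
      (μ ξ).map (fun ω => π (ξ, ω)) M = μ ξ {ω | π (ξ, ω) ∈ M} := fun ξ M hM =>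
    Measure.map_apply (hπξ ξ) hM
  refine ⟨fun ξ => (μ ξ).map (fun ω => π (ξ, ω)), fun ξ ω => π (ξ, ω), fun ξ ω => hπ1 _,
    fun A hA => (hπA A hA).mono hmle le_rfl,
    fun ξ => Measure.isProbabilityMeasure_map (hπξ ξ).aemeasurable, hw, ?_, ?_, ?_⟩
  · refine Measure.measurable_of_measurable_coe _ fun M hM => ?_
    simp only [hw _ M hM]
    exact ProbabilityTheory.Kernel.measurable_kernel_prodMk_left (κ := κ) (hπm' hM)
  · filter_upwards [hgood'] with ξ hξ
    have hgm := good_meas 𝒜 hc h𝒜 L ns (γ ξ) (hγ.spec ξ)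
    refine ⟨(Good 𝒜 L ns (γ ξ))ᶜ, hgm.compl, ?_, Set.compl_subset_compl.2
      (good_subset 𝒜 hgen hpi h𝒜 L ns (γ ξ) (hγ.spec ξ))⟩
    rw [hw ξ _ hgm.compl]
    exact hξ
  · have h1 : ∀ A ∈ 𝒜, ∀ᵐ ξ ∂ℙ, ∫⁻ ω, π (ξ, ω) A ∂(μ ξ) = μ ξ A := by
      intro A hA
      have hA' := h𝒜 A hA
      have hm1 : Measurable fun x => π x A := (hπA A hA').mono hmle le_rfl
      refine ae_eq_of_forall_setLIntegral_eq_of_sigmaFinite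
        (hm1.lintegral_kernel_prod_right' (κ := κ))
        ((Measure.measurable_coe hA').comp hμmeas) fun D hD _ => ?_
      have h := hπset A hA' (Prod.fst ⁻¹' D) (hfst hD)
      rw [← lintegral_indicator (measurable_fst hD), hP,
        Measure.lintegral_compProd (hm1.indicator (measurable_fst hD)),
        Measure.compProd_apply ((measurable_fst hD).inter (measurable_snd hA'))] at h
      rw [← lintegral_indicator hD, ← lintegral_indicator hD]
      refine Eq.trans (lintegral_congr fun ξ => ?_) (h.trans (lintegral_congr fun ξ => ?_))
      · by_cases hx : ξ ∈ D <;> simp [hx, hκ]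
      · rw [hκ]
        by_cases hx : ξ ∈ D
        · rw [Set.indicator_of_mem hx]; congr 1; ext ω; simp [hx]
        · rw [Set.indicator_of_notMem hx]
          refine measure_mono_null (t := ∅) (fun ω => ?_) measure_empty
          simp [hx]
    filter_upwards [(ae_ball_iff hc).2 h1] with ξ hξ A hA
    have hb : ∀ A, MeasurableSet A →
        (μ ξ).bind (fun ω => π (ξ, ω)) A = ∫⁻ ω, π (ξ, ω) A ∂(μ ξ) := fun A hA =>
      Measure.bind_apply hA (hπξ ξ).aemeasurable
    have heq : μ ξ = (μ ξ).bind (fun ω => π (ξ, ω)) := by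
      refine ext_of_generate_finite 𝒜 hgen hpi (fun A hA => ?_) ?_
      · rw [hb A (h𝒜 A hA), hξ A hA]
      · rw [hb _ MeasurableSet.univ]; simp
    rw [lintegral_map (Measure.measurable_coe hA) (hπξ ξ), ← hb A hA, ← heq]

end GibbsMeta
end

section
/- Let γ[·] be a random specification on Ω = E^S such that 𝒢(γ[ξ]) ≠ ∅ for ℙ-almost every ξ, and let κ be a metastate. Then there exists a metastate κ^ex (the decomposition metastate) with the following two properties: (1) κ^ex has the same barycenter as κ, i.e. for ℙ-almost every ξ, ∫ ν(A) κ^ex[ξ](dν) = ∫ ν(A) κ[ξ](dν) for every A ∈ ℱ; and (2) for ℙ-almost every ξ, κ^ex[ξ]-almost every ν ∈ 𝒫(Ω) belongs to ex 𝒢(γ[ξ]) (i.e. the complement of ex 𝒢(γ[ξ]) is contained in a κ^ex[ξ]-null set in e(𝒫(Ω))). -/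
open MeasureTheory Filter Topology
open scoped ENNReal NNReal

namespace GibbsMeta

variable {S E H : Type*}

/-- A metastate: a measurable map `κ : H → 𝒫(𝒫(Ω))` such that for `ℙ`-a.e. `ξ`,
`κ[ξ]`-almost every `ν` is a Gibbs measure for `γ[ξ]`. -/
def IsMetastate [MeasurableSpace E] [MeasurableSpace H]
    (ℙ : Measure H) (γ : H → Finset S → (S → E) → Measure (S → E))
    (κ : H → Measure (Measure (S → E))) : Prop :=
  Measurable κ ∧ (∀ ξ, IsProbabilityMeasure (κ ξ)) ∧
  ∀ᵐ ξ ∂ℙ, ∃ N : Set (Measure (S → E)), MeasurableSet N ∧ κ ξ N = 0 ∧ (Gibbs (γ ξ))ᶜ ⊆ N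

theorem exists_countable_piSystem (Ω : Type*) [mΩ : MeasurableSpace Ω]
    [MeasurableSpace.CountablyGenerated Ω] :
    ∃ C : Set (Set Ω), C.Countable ∧ IsPiSystem C ∧ mΩ = MeasurableSpace.generateFrom C := by
  classical
  let s := MeasurableSpace.natGeneratingSequence Ω
  refine ⟨Set.range (fun F : Finset ℕ => ⋂ i ∈ F, s i), Set.countable_range _, ?_, ?_⟩
  · rintro _ ⟨F, rfl⟩ _ ⟨G, rfl⟩ _
    refine ⟨F ∪ G, ?_⟩
    ext x
    simp [or_imp, forall_and]
  · apply le_antisymm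
    · conv_lhs => rw [← MeasurableSpace.generateFrom_natGeneratingSequence Ω]
      apply MeasurableSpace.generateFrom_mono
      rintro _ ⟨n, rfl⟩
      exact ⟨{n}, by simp [s]⟩
    · apply MeasurableSpace.generateFrom_le
      rintro _ ⟨F, rfl⟩
      exact F.measurableSet_biInter fun i _ => MeasurableSpace.measurableSet_natGeneratingSequence i

theorem sq_lintegral_le {Ω : Type*} [MeasurableSpace Ω] (ν : Measure Ω) [IsProbabilityMeasure ν]
    (f : Ω → ℝ≥0∞) (hf : Measurable f) : (∫⁻ x, f x ∂ν) ^ 2 ≤ ∫⁻ x, f x ^ 2 ∂ν := by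
  have h := ENNReal.lintegral_mul_le_Lp_mul_Lq ν (p := 2) (q := 2) (by constructor <;> norm_num)
    hf.aemeasurable (aemeasurable_const (b := (1 : ℝ≥0∞)))
  simp at h
  calc (∫⁻ x, f x ∂ν) ^ 2 ≤ ((∫⁻ x, f x ^ 2 ∂ν) ^ (2⁻¹ : ℝ)) ^ 2 := by gcongr
    _ = _ := by rw [← ENNReal.rpow_natCast, ← ENNReal.rpow_mul]; norm_num

theorem exists_cond_aux {α β Ω : Type*} [MeasurableSpace Ω] [StandardBorelSpace Ω] [Nonempty Ω]
    [MeasurableSpace α] [MeasurableSpace β] (M : Measure α) [IsProbabilityMeasure M]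
    (X : α → β) (hX : Measurable X) (Y : α → Ω) (hY : Measurable Y) :
    ∃ π : β → Measure Ω, Measurable π ∧ (∀ x, IsProbabilityMeasure (π x)) ∧
      ∀ F : β → Ω → ℝ≥0∞, Measurable (fun p : β × Ω => F p.1 p.2) →
        Measurable (fun x => ∫⁻ σ, F x σ ∂(π x)) ∧
        ∀ B, MeasurableSet B →
        ∫⁻ x in X ⁻¹' B, ∫⁻ σ, F (X x) σ ∂(π (X x)) ∂M = ∫⁻ x in X ⁻¹' B, F (X x) (Y x) ∂M := by
  let K := ProbabilityTheory.condDistrib Y X M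
  have hK := ProbabilityTheory.compProd_map_condDistrib (X := X) (μ := M) (mβ := inferInstance)
    hY.aemeasurable
  refine ⟨K, K.measurable, fun x => inferInstance, fun F hF => ?_⟩
  have hmeas : Measurable (fun x => ∫⁻ σ, F x σ ∂(K x)) := Measurable.lintegral_kernel_prod_right hF
  refine ⟨hmeas, fun B hB => ?_⟩
  have hprob : IsProbabilityMeasure (M.map X) :=
    Measure.isProbabilityMeasure_map hX.aemeasurable
  have h1 := Measure.setLIntegral_compProd (μ := M.map X) (κ := K) hF hB MeasurableSet.univ
  rw [hK, setLIntegral_map (hB.prod MeasurableSet.univ) hF (hX.prodMk hY)] at h1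
  simp only [Measure.restrict_univ] at h1
  rw [setLIntegral_map hB hmeas hX] at h1
  rw [← h1]
  congr 2
  ext x
  simp

theorem exists_cond {α Ω : Type*} [MeasurableSpace Ω] [StandardBorelSpace Ω] [Nonempty Ω]
    (m m0 : MeasurableSpace α) (hm : m ≤ m0) (M : Measure[m0] α) [IsProbabilityMeasure M]
    (Y : α → Ω) (hY : Measurable[m0] Y) :
    ∃ π : α → Measure Ω, Measurable[m] π ∧ (∀ x, IsProbabilityMeasure (π x)) ∧
      ∀ F : α → Ω → ℝ≥0∞, Measurable[m.prod inferInstance] (fun p : α × Ω => F p.1 p.2) →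
        Measurable[m] (fun x => ∫⁻ σ, F x σ ∂(π x)) ∧
        ∀ B, MeasurableSet[m] B →
        ∫⁻ x in B, ∫⁻ σ, F x σ ∂(π x) ∂M = ∫⁻ x in B, F x (Y x) ∂M :=
  @exists_cond_aux α α Ω _ _ _ m0 m M _ id (fun s hs => hm s hs) Y hY

theorem ae_eq_of_sub {α : Type*} (m m0 : MeasurableSpace α) (hm : m ≤ m0) (M : Measure[m0] α)
    [IsProbabilityMeasure M] (u v : α → ℝ≥0∞) (hu : Measurable[m] u) (hv : Measurable[m] v)
    (h : ∀ B, MeasurableSet[m] B → ∫⁻ x in B, u x ∂M = ∫⁻ x in B, v x ∂M) : u =ᵐ[M] v := by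
  refine ae_eq_of_ae_eq_trim (hm := hm) ?_
  refine ae_eq_of_forall_setLIntegral_eq_of_sigmaFinite hu hv fun s hs _ => ?_
  rw [restrict_trim hm _ hs, lintegral_trim hm hu, lintegral_trim hm hv]
  exact h s hs

theorem aesm_iInf {α : Type*} (m0 : MeasurableSpace α) (m : ℕ → MeasurableSpace α)
    (hanti : Antitone m) (M : Measure[m0] α) (f : α → ℝ)
    (h : ∀ n, AEStronglyMeasurable[m n] f M) : AEStronglyMeasurable[⨅ n, m n] f M := by
  choose g hg hfg using h
  refine ⟨fun x => limsup (fun n => g n x) atTop, ?_, ?_⟩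
  · suffices hmm : Measurable[⨅ n, m n] (fun x => limsup (fun n => g n x) atTop) from
      hmm.stronglyMeasurable
    intro s hs
    rw [MeasurableSpace.measurableSet_iInf]
    intro k
    have : (fun x => limsup (fun n => g n x) atTop) = fun x => limsup (fun n => g (n + k) x) atTop := by
      funext x
      exact (Filter.limsup_nat_add (fun n => g n x) k).symm
    rw [this]
    suffices hmm : Measurable[m k] (fun x => limsup (fun n => g (n + k) x) atTop) from hmm hs
    refine Measurable.limsup fun n => ?_
    exact (hg (n + k)).measurable.mono (hanti (Nat.le_add_left k n)) le_rfl
  · have : ∀ᵐ x ∂M, ∀ n, f x = g n x := ae_all_iff.2 hfg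
    filter_upwards [this] with x hx
    simp [← hx]

theorem norm_sq_tendsto {V : Type*} [NormedAddCommGroup V] [InnerProductSpace ℝ V] [CompleteSpace V]
    (K : ℕ → Submodule ℝ V) [∀ n, (K n).HasOrthogonalProjection] (hK : Antitone K)
    [(⨅ n, K n).HasOrthogonalProjection] (x : V) :
    Tendsto (fun n => (K n).starProjection x) atTop (𝓝 ((⨅ n, K n).starProjection x)) := by
  have hE : (⨆ n, (K n)ᗮ).topologicalClosure = (⨅ n, K n)ᗮ := by
    rw [← Submodule.orthogonal_orthogonal_eq_closure, ← Submodule.iInf_orthogonal]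
    simp
  have h := Submodule.starProjection_tendsto_closure_iSup (fun n => (K n)ᗮ)
    (fun a b hab => Submodule.orthogonal_le (hK hab)) x
  simp only [hE, Submodule.starProjection_orthogonal_val] at h
  simpa using h.const_sub x

theorem condExp_sq_tendsto {α : Type*} [m0 : MeasurableSpace α] (m : ℕ → MeasurableSpace α)
    (hanti : Antitone m) (hm : ∀ n, m n ≤ m0) (M : Measure α) [IsProbabilityMeasure M]
    (f : α → ℝ) (hf : MemLp f 2 M) :
    Tendsto (fun n => eLpNorm (M[f|m n]) 2 M) atTop (𝓝 (eLpNorm (M[f|⨅ n, m n]) 2 M)) := by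
  have hm' : (⨅ n, m n) ≤ m0 := (iInf_le _ 0).trans (hm 0)
  have : ∀ n, Fact (m n ≤ m0) := fun n => ⟨hm n⟩
  have : Fact ((⨅ n, m n) ≤ m0) := ⟨hm'⟩
  let K : ℕ → Submodule ℝ (Lp ℝ 2 M) := fun n => lpMeas ℝ ℝ (m n) 2 M
  have hKe : lpMeas ℝ ℝ (⨅ n, m n) 2 M = ⨅ n, K n := by
    ext x
    simp only [K, Submodule.mem_iInf, mem_lpMeas_iff_aestronglyMeasurable]
    constructor
    · rintro ⟨g, hg, h⟩ n
      exact ⟨g, hg.mono (iInf_le _ n), h⟩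
    · exact aesm_iInf m0 m hanti M x
  have : ∀ n, (K n).HasOrthogonalProjection := fun n => by dsimp only [K]; infer_instance
  have : (⨅ n, K n).HasOrthogonalProjection := by rw [← hKe]; infer_instance
  have hKa : Antitone K := by
    intro a b hab x hx
    simp only [K, mem_lpMeas_iff_aestronglyMeasurable] at hx ⊢
    obtain ⟨g, hg, h⟩ := hx
    exact ⟨g, hg.mono (hanti hab), h⟩
  have h := norm_sq_tendsto K hKa hf.toLp
  have key : ∀ (m' : MeasurableSpace α) (h' : m' ≤ m0) (x : Lp ℝ 2 M),
      x = (condExpL2 ℝ ℝ h' hf.toLp : Lp ℝ 2 M) → eLpNorm (M[f|m']) 2 M = ‖x‖ₑ := by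
    rintro m' h' _ rfl
    rw [Lp.enorm_def]
    exact eLpNorm_congr_ae (hf.condExpL2_ae_eq_condExp (𝕜 := ℝ) h').symm
  have h1 : ∀ n, eLpNorm (M[f|m n]) 2 M = ‖(K n).starProjection hf.toLp‖ₑ := fun n =>
    key _ (hm n) _ rfl
  have h2 : eLpNorm (M[f|⨅ n, m n]) 2 M = ‖(⨅ n, K n).starProjection hf.toLp‖ₑ := by
    refine key _ hm' _ ?_
    simp only [← hKe]
    rfl
  simp only [h1, h2]
  exact h.enorm

theorem rev_mart {α : Type*} [m0 : MeasurableSpace α] (m : ℕ → MeasurableSpace α)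
    (hanti : Antitone m) (hm : ∀ n, m n ≤ m0) (M : Measure α) [IsProbabilityMeasure M]
    (A : Set α) (hA : MeasurableSet A) (f : ℕ → α → ℝ≥0∞) (g : α → ℝ≥0∞)
    (hf : ∀ n, Measurable[m n] (f n)) (hf1 : ∀ n x, f n x ≤ 1)
    (hfe : ∀ n B, MeasurableSet[m n] B → ∫⁻ x in B, f n x ∂M = M (A ∩ B))
    (hg : Measurable[⨅ n, m n] g) (hg1 : ∀ x, g x ≤ 1)
    (hge : ∀ B, MeasurableSet[⨅ n, m n] B → ∫⁻ x in B, g x ∂M = M (A ∩ B)) :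
    ⨅ n, ∫⁻ x, f n x ^ 2 ∂M ≤ ∫⁻ x, g x ^ 2 ∂M := by
  have hm' : (⨅ n, m n) ≤ m0 := (iInf_le _ 0).trans (hm 0)
  have hL : MemLp (A.indicator fun _ => (1 : ℝ)) 2 M :=
    memLp_indicator_const 2 hA 1 (Or.inr (measure_ne_top _ _))
  have ht := condExp_sq_tendsto m hanti hm M _ hL
  have key : ∀ (m' : MeasurableSpace α) (h' : m' ≤ m0) (u : α → ℝ≥0∞) (hu : Measurable[m'] u)
      (hu1 : ∀ x, u x ≤ 1) (hue : ∀ B, MeasurableSet[m'] B → ∫⁻ x in B, u x ∂M = M (A ∩ B)),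
      ∫⁻ x, u x ^ 2 ∂M = eLpNorm (M[A.indicator fun _ => (1 : ℝ)|m']) 2 M ^ 2 := by
    intro m' h' u hu hu1 hue
    have hufin : ∀ x, u x ≠ ∞ := fun x => ((hu1 x).trans_lt ENNReal.one_lt_top).ne
    have hum : Measurable[m0] u := hu.mono h' le_rfl
    have hInt : Integrable (fun x => (u x).toReal) M := by
      refine integrable_toReal_of_lintegral_ne_top hum.aemeasurable ?_
      refine ((lintegral_mono hu1).trans_lt ?_).ne
      simp
    have e : (fun x => (u x).toReal) =ᵐ[M] M[A.indicator fun _ => (1 : ℝ)|m'] := by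
      refine ae_eq_condExp_of_forall_setIntegral_eq h' (hL.integrable one_le_two)
        (fun s _ _ => hInt.integrableOn) (fun s hs _ => ?_) ?_
      · rw [integral_toReal hum.aemeasurable (ae_of_all _ fun x => (hufin x).lt_top), hue s hs,
          integral_indicator hA, Measure.restrict_restrict hA]
        simp [Measure.real]
      · exact (hu.ennreal_toReal.stronglyMeasurable).aestronglyMeasurable
    rw [← eLpNorm_congr_ae e, eLpNorm_eq_lintegral_rpow_enorm_toReal (by norm_num) (by norm_num),
      ← ENNReal.rpow_natCast, ← ENNReal.rpow_mul]
    norm_num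
    refine lintegral_congr fun x => ?_
    rw [Real.enorm_eq_ofReal ENNReal.toReal_nonneg, ENNReal.ofReal_toReal (hufin x)]
  rw [key _ hm' g hg hg1 hge]
  simp only [fun n => key _ (hm n) (f n) (hf n) (hf1 n) (hfe n)]
  exact ge_of_tendsto' (((ENNReal.continuous_pow 2).tendsto _).comp ht) fun n => iInf_le _ n

theorem cylSigma_le (S E : Type*) [MeasurableSpace E] (Δ : Set S) :
    cylSigma S E Δ ≤ MeasurableSpace.pi :=
  iSup₂_le fun i _ => (measurable_pi_apply i).comap_le

theorem cylSigma_mono (S E : Type*) [MeasurableSpace E] {Δ Δ' : Set S} (h : Δ ⊆ Δ') :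
    cylSigma S E Δ ≤ cylSigma S E Δ' :=
  biSup_mono fun _ hi => h hi

theorem spec_meas [MeasurableSpace E] {γ : Finset S → (S → E) → Measure (S → E)}
    (hγ : IsSpecification γ) (Λ : Finset S) {A : Set (S → E)} (hA : MeasurableSet A) :
    Measurable fun ω => γ Λ ω A :=
  (hγ.meas Λ A hA).mono (cylSigma_le _ _ _) le_rfl

theorem gibbs_of_piSystem [MeasurableSpace E] {γ : Finset S → (S → E) → Measure (S → E)}
    (hγ : IsSpecification γ) (C : Set (Set (S → E))) (hC : IsPiSystem C)
    (hgen : MeasurableSpace.pi = MeasurableSpace.generateFrom C) (ν : Measure (S → E))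
    (hν : IsProbabilityMeasure ν)
    (h : ∀ Λ : Finset S, ∀ A ∈ C, ∫⁻ ω, γ Λ ω A ∂ν = ν A) : ν ∈ Gibbs γ := by
  refine ⟨hν, fun Λ A hA => ?_⟩
  have hm : Measurable (γ Λ) := Measure.measurable_of_measurable_coe _ fun A hA => spec_meas hγ Λ hA
  have hCm : ∀ A ∈ C, MeasurableSet A := fun A hA => by
    rw [hgen]; exact MeasurableSpace.measurableSet_generateFrom hA
  have := hγ.prob Λ
  have e : ν = ν.bind (γ Λ) := by
    refine ext_of_generate_finite C hgen hC (fun A hA => ?_) ?_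
    · rw [Measure.bind_apply (hCm A hA) hm.aemeasurable, h Λ A hA]
    · rw [Measure.bind_apply MeasurableSet.univ hm.aemeasurable]
      simp
  conv_rhs => rw [e]
  rw [Measure.bind_apply hA hm.aemeasurable]

theorem convex_sq_eq {t a b : ℝ≥0∞} (ht : 0 < t) (ht1 : t < 1) (ha : a ≤ 1) (hb : b ≤ 1)
    (h : t * a ^ 2 + (1 - t) * b ^ 2 ≤ (t * a + (1 - t) * b) ^ 2) : a = b := by
  lift t to ℝ≥0 using (ht1.trans ENNReal.one_lt_top).ne
  lift a to ℝ≥0 using (ha.trans_lt ENNReal.one_lt_top).ne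
  lift b to ℝ≥0 using (hb.trans_lt ENNReal.one_lt_top).ne
  norm_cast at *
  rw [← NNReal.coe_le_coe] at h
  push_cast [NNReal.coe_sub ht1.le] at h
  have h1 : (0 : ℝ) < t := ht
  have h2 : (t : ℝ) < 1 := ht1
  have h3 : (t : ℝ) * (1 - t) * ((a : ℝ) - b) ^ 2 ≤ 0 := by nlinarith
  have h4 : 0 < (t : ℝ) * (1 - t) := mul_pos h1 (by linarith)
  have h5 : ((a : ℝ) - b) ^ 2 = 0 :=
    le_antisymm (nonpos_of_mul_nonpos_right h3 h4) (sq_nonneg _)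
  have h6 : (a : ℝ) = b := by nlinarith [pow_eq_zero_iff (two_ne_zero) |>.1 h5]
  exact_mod_cast h6

theorem mem_exGibbs_of [MeasurableSpace E] {γ : Finset S → (S → E) → Measure (S → E)}
    (hγ : IsSpecification γ) (C : Set (Set (S → E))) (hC : IsPiSystem C)
    (hgen : MeasurableSpace.pi = MeasurableSpace.generateFrom C) (Λ : ℕ → Finset S)
    (ν : Measure (S → E)) (hν : ν ∈ Gibbs γ)
    (h : ∀ A ∈ C, ⨅ n, ∫⁻ ω, γ (Λ n) ω A ^ 2 ∂ν ≤ ν A ^ 2) : ν ∈ exGibbs γ := by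
  refine ⟨hν, ?_⟩
  rintro ν₁ ⟨hp1, h1⟩ ν₂ ⟨hp2, h2⟩ t ht ht1 rfl
  have hCm : ∀ A ∈ C, MeasurableSet A := fun A hA => by
    rw [hgen]; exact MeasurableSpace.measurableSet_generateFrom hA
  have e : ν₁ = ν₂ := by
    refine ext_of_generate_finite C hgen hC (fun A hA => ?_) (by simp)
    refine convex_sq_eq ht ht1 prob_le_one prob_le_one ?_
    refine le_trans (le_iInf fun n => ?_) ((h A hA).trans_eq ?_)
    · rw [lintegral_add_measure, lintegral_smul_measure, lintegral_smul_measure]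
      have hm := spec_meas hγ (Λ n) (hCm A hA)
      rw [smul_eq_mul, smul_eq_mul]
      gcongr
      · rw [← h1 (Λ n) A (hCm A hA)]
        exact sq_lintegral_le ν₁ _ hm
      · rw [← h2 (Λ n) A (hCm A hA)]
        exact sq_lintegral_le ν₂ _ hm
    · simp
  subst e
  have : t • ν₁ + (1 - t) • ν₁ = ν₁ := by
    rw [← add_smul, add_tsub_cancel_of_le ht1.le, one_smul]
  rw [this]
  exact ⟨rfl, rfl⟩

/-- A measurable set of extremal Gibbs measures. -/
def goodSet [MeasurableSpace E] (γ : Finset S → (S → E) → Measure (S → E))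
    (C : Set (Set (S → E))) (Λ : ℕ → Finset S) : Set (Measure (S → E)) :=
  {ν | ν Set.univ = 1 ∧ (∀ Δ : Finset S, ∀ A ∈ C, ∫⁻ ω, γ Δ ω A ∂ν = ν A) ∧
    ∀ A ∈ C, ⨅ n, ∫⁻ ω, γ (Λ n) ω A ^ 2 ∂ν ≤ ν A ^ 2}

theorem measurableSet_goodSet [Countable S] [MeasurableSpace E]
    {γ : Finset S → (S → E) → Measure (S → E)}
    (hγ : IsSpecification γ) (C : Set (Set (S → E))) (hCc : C.Countable)
    (hCm : ∀ A ∈ C, MeasurableSet A) (Λ : ℕ → Finset S) : MeasurableSet (goodSet γ C Λ) := by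
  have h1 : MeasurableSet {ν : Measure (S → E) | ν Set.univ = 1} :=
    measurableSet_eq_fun (Measure.measurable_coe MeasurableSet.univ) measurable_const
  have h2 : MeasurableSet (⋂ Δ : Finset S, ⋂ A ∈ C,
      {ν : Measure (S → E) | ∫⁻ ω, γ Δ ω A ∂ν = ν A}) := by
    refine MeasurableSet.iInter fun Δ => MeasurableSet.biInter hCc fun A hA => ?_
    exact measurableSet_eq_fun (Measure.measurable_lintegral (spec_meas hγ Δ (hCm A hA)))
      (Measure.measurable_coe (hCm A hA))
  have h3 : MeasurableSet (⋂ A ∈ C,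
      {ν : Measure (S → E) | ⨅ n, ∫⁻ ω, γ (Λ n) ω A ^ 2 ∂ν ≤ ν A ^ 2}) := by
    refine MeasurableSet.biInter hCc fun A hA => ?_
    exact measurableSet_le (Measurable.iInf fun n =>
      Measure.measurable_lintegral ((spec_meas hγ (Λ n) (hCm A hA)).pow_const 2))
      ((Measure.measurable_coe (hCm A hA)).pow_const 2)
  convert h1.inter (h2.inter h3) using 1
  ext ν
  simp [goodSet]

theorem goodSet_subset [MeasurableSpace E] {γ : Finset S → (S → E) → Measure (S → E)}
    (hγ : IsSpecification γ) (C : Set (Set (S → E))) (hC : IsPiSystem C)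
    (hgen : MeasurableSpace.pi = MeasurableSpace.generateFrom C) (Λ : ℕ → Finset S) :
    goodSet γ C Λ ⊆ exGibbs γ := by
  rintro ν ⟨h1, h2, h3⟩
  exact mem_exGibbs_of hγ C hC hgen Λ ν (gibbs_of_piSystem hγ C hC hgen ν ⟨h1⟩ h2) h3

/-- Jointly measurable sets all of whose sections are in `m`. -/
def secSigma (H : Type*) {Ω : Type*} (m : MeasurableSpace Ω) [mH : MeasurableSpace H]
    [mΩ : MeasurableSpace Ω] : MeasurableSpace (H × Ω) :=
  (MeasurableSpace.prod mH mΩ) ⊓ ⨅ ξ : H, m.map (Prod.mk ξ)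

theorem secSigma_iff {H Ω : Type*} (m : MeasurableSpace Ω) [MeasurableSpace H] [MeasurableSpace Ω]
    (B : Set (H × Ω)) :
    MeasurableSet[secSigma H m] B ↔ MeasurableSet B ∧ ∀ ξ, MeasurableSet[m] (Prod.mk ξ ⁻¹' B) := by
  unfold secSigma
  rw [MeasurableSpace.measurableSet_inf, MeasurableSpace.measurableSet_iInf]
  rfl

theorem spec_cond [MeasurableSpace E] [MeasurableSpace H]
    (ℙ : Measure H) [IsProbabilityMeasure ℙ]
    (γ : H → Finset S → (S → E) → Measure (S → E))
    (hγ : IsRandomSpecification γ) (μ : ProbabilityTheory.Kernel H (S → E))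
    [ProbabilityTheory.IsMarkovKernel μ] (hμ : ∀ᵐ ξ ∂ℙ, μ ξ ∈ Gibbs (γ ξ))
    (Λ : Finset S) (A : Set (S → E)) (hA : MeasurableSet A) (B : Set (H × (S → E)))
    (hB : MeasurableSet[secSigma H (cylSigma S E ((↑Λ : Set S)ᶜ))] B) :
    ∫⁻ x in B, γ x.1 Λ x.2 A ∂(ℙ.compProd μ) = (ℙ.compProd μ) (Prod.snd ⁻¹' A ∩ B) := by
  rw [secSigma_iff] at hB
  obtain ⟨hB, hBs⟩ := hB
  rw [← lintegral_indicator hB,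
    Measure.lintegral_compProd ((hγ.jointMeas Λ A hA).indicator hB),
    Measure.compProd_apply ((measurable_snd hA).inter hB)]
  refine lintegral_congr_ae ?_
  filter_upwards [hμ] with ξ hξ
  have hBξ : MeasurableSet (Prod.mk ξ ⁻¹' B) := measurable_prodMk_left hB
  rw [show Prod.mk ξ ⁻¹' (Prod.snd ⁻¹' A ∩ B) = A ∩ (Prod.mk ξ ⁻¹' B) from rfl,
    ← hξ.2 Λ _ (hA.inter hBξ)]
  refine lintegral_congr fun ω => ?_
  have hp := (hγ.spec ξ).proper Λ _ (hBs ξ) ω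
  have := (hγ.spec ξ).prob Λ ω
  by_cases hω : (ξ, ω) ∈ B
  · rw [Set.indicator_of_mem hω]
    rw [Set.indicator_of_mem (show ω ∈ Prod.mk ξ ⁻¹' B from hω)] at hp
    symm
    rw [← measure_inter_add_diff A hBξ]
    have : γ ξ Λ ω (A \ (Prod.mk ξ ⁻¹' B)) = 0 :=
      measure_mono_null (fun x hx => hx.2) ((prob_compl_eq_zero_iff hBξ).2 hp)
    rw [this, add_zero]
  · rw [Set.indicator_of_notMem hω]
    rw [Set.indicator_of_notMem (show ω ∉ Prod.mk ξ ⁻¹' B from hω)] at hp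
    exact (measure_mono_null Set.inter_subset_right hp).symm
/-- Joint measurability after substituting a measurable map in the first coordinate. -/
theorem hF_aux {β H' Ω : Type*} (m : MeasurableSpace β) (mH : MeasurableSpace H')
    (mΩ : MeasurableSpace Ω) (X : β → H') (hX : Measurable X) (G : H' × Ω → ℝ≥0∞)
    (hG : Measurable G) : Measurable fun p : β × Ω => G (X p.1, p.2) :=
  hG.comp ((hX.comp measurable_fst).prodMk measurable_snd)


theorem core [Countable S] [MeasurableSpace E] [StandardBorelSpace E] [MeasurableSpace H]
    [Nonempty (S → E)]
    (ℙ : Measure H) [IsProbabilityMeasure ℙ]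
    (γ : H → Finset S → (S → E) → Measure (S → E))
    (hγ : IsRandomSpecification γ) (μ : ProbabilityTheory.Kernel H (S → E))
    [ProbabilityTheory.IsMarkovKernel μ] (hμ : ∀ᵐ ξ ∂ℙ, μ ξ ∈ Gibbs (γ ξ)) :
    ∃ κex : H → Measure (Measure (S → E)), Measurable κex ∧ (∀ ξ, IsProbabilityMeasure (κex ξ)) ∧
      (∀ᵐ ξ ∂ℙ, ∀ A : Set (S → E), MeasurableSet A → ∫⁻ ν, ν A ∂(κex ξ) = μ ξ A) ∧
      (∀ᵐ ξ ∂ℙ, ∃ N : Set (Measure (S → E)), MeasurableSet N ∧ κex ξ N = 0 ∧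
        (exGibbs (γ ξ))ᶜ ⊆ N) := by
  obtain ⟨C, hCc, hCpi, hgen⟩ := exists_countable_piSystem (S → E)
  have hCm : ∀ A ∈ C, MeasurableSet A := fun A hA => by
    rw [hgen]; exact MeasurableSpace.measurableSet_generateFrom hA
  obtain ⟨Λ, hΛm, hΛt⟩ := exists_seq_monotone_tendsto_atTop_atTop (Finset S)
  let 𝒜 : ℕ → MeasurableSpace (H × (S → E)) :=
    fun n => secSigma H (cylSigma S E ((↑(Λ n) : Set S)ᶜ))
  have hle : ∀ n, 𝒜 n ≤ (inferInstance : MeasurableSpace (H × (S → E))) := fun n => inf_le_left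
  have hmono : ∀ {Δ Δ' : Finset S}, Δ ⊆ Δ' → secSigma H (cylSigma S E ((↑Δ' : Set S)ᶜ)) ≤
      secSigma H (cylSigma S E ((↑Δ : Set S)ᶜ)) := by
    intro Δ Δ' h B hB
    rw [secSigma_iff] at hB ⊢
    exact ⟨hB.1, fun ξ => cylSigma_mono S E
      (Set.compl_subset_compl.2 (Finset.coe_subset.2 h)) _ (hB.2 ξ)⟩
  have hanti : Antitone 𝒜 := fun a b hab => hmono (hΛm hab)
  have hinfle : (⨅ n, 𝒜 n) ≤ (inferInstance : MeasurableSpace (H × (S → E))) :=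
    (iInf_le _ 0).trans (hle 0)
  have hinf : ∀ Δ : Finset S, (⨅ n, 𝒜 n) ≤ secSigma H (cylSigma S E ((↑Δ : Set S)ᶜ)) := by
    intro Δ
    obtain ⟨n, hn⟩ := (hΛt.eventually (eventually_ge_atTop Δ)).exists
    exact (iInf_le _ n).trans (hmono hn)
  have hfst : Measurable[⨅ n, 𝒜 n] (Prod.fst : H × (S → E) → H) := by
    intro s hs
    rw [MeasurableSpace.measurableSet_iInf]
    intro n
    refine (secSigma_iff _ _).2 ⟨measurable_fst hs, fun ξ => ?_⟩
    by_cases h : ξ ∈ s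
    · rw [show Prod.mk ξ ⁻¹' (Prod.fst ⁻¹' s : Set (H × (S → E))) = Set.univ by ext; simp [h]]
      exact @MeasurableSet.univ _ (cylSigma S E ((↑(Λ n) : Set S)ᶜ))
    · rw [show Prod.mk ξ ⁻¹' (Prod.fst ⁻¹' s : Set (H × (S → E))) = ∅ by ext; simp [h]]
      exact @MeasurableSet.empty _ (cylSigma S E ((↑(Λ n) : Set S)ᶜ))
  let M := ℙ.compProd μ
  have hsc := spec_cond ℙ γ hγ μ hμ
  obtain ⟨π, hπm, hπp, hπ⟩ := exists_cond (⨅ n, 𝒜 n) inferInstance hinfle M Prod.snd measurable_snd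
  have hπm' : Measurable π := hπm.mono hinfle le_rfl
  -- jointly measurable functions of `(x.1, σ)`
  have hF : ∀ G : H × (S → E) → ℝ≥0∞, Measurable G →
      Measurable[(⨅ n, 𝒜 n).prod inferInstance]
        (fun p : (H × (S → E)) × (S → E) => G (p.1.1, p.2)) := by
    intro G hG
    exact hF_aux (⨅ n, 𝒜 n) inferInstance inferInstance Prod.fst hfst G hG
  have hπA : ∀ A, MeasurableSet A → Measurable[⨅ n, 𝒜 n] fun x => π x A :=
    fun A hA => (Measure.measurable_coe hA).comp hπm
  have hπB : ∀ A, MeasurableSet A → ∀ B, MeasurableSet[⨅ n, 𝒜 n] B →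
      ∫⁻ x in B, π x A ∂M = M (Prod.snd ⁻¹' A ∩ B) := by
    intro A hA B hB
    have h := (hπ (fun _ σ => A.indicator 1 σ)
      (hF (fun p => A.indicator 1 p.2) ((measurable_one.indicator hA).comp measurable_snd))).2 B hB
    simp only [lintegral_indicator_one hA] at h
    rw [h, ← Measure.restrict_apply (measurable_snd hA),
      ← lintegral_indicator_one (measurable_snd hA)]
    rfl
  have hG1 : ∀ᵐ x ∂M, ∀ Δ : Finset S, ∀ A ∈ C, ∫⁻ ω, γ x.1 Δ ω A ∂(π x) = π x A := by
    refine ae_all_iff.2 fun Δ => (ae_ball_iff hCc).2 fun A hA => ?_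
    have h := hπ (fun x σ => γ x.1 Δ σ A) (hF (fun p => γ p.1 Δ p.2 A) (hγ.jointMeas Δ A (hCm A hA)))
    refine ae_eq_of_sub (⨅ n, 𝒜 n) inferInstance hinfle M _ _ h.1 (hπA A (hCm A hA)) fun B hB => ?_
    rw [h.2 B hB, hπB A (hCm A hA) B hB]
    exact hsc Δ A (hCm A hA) B (hinf Δ B hB)
  have hG2 : ∀ᵐ x ∂M, ∀ A ∈ C, ⨅ n, ∫⁻ ω, γ x.1 (Λ n) ω A ^ 2 ∂(π x) ≤ π x A ^ 2 := by
    refine (ae_ball_iff hCc).2 fun A hA => ?_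
    have hAm := hCm A hA
    have h := fun n => hπ (fun x σ => γ x.1 (Λ n) σ A ^ 2)
      (hF (fun p => γ p.1 (Λ n) p.2 A ^ 2) ((hγ.jointMeas (Λ n) A hAm).pow_const 2))
    have hum : Measurable fun x => ⨅ n, ∫⁻ ω, γ x.1 (Λ n) ω A ^ 2 ∂(π x) :=
      Measurable.iInf fun n => (h n).1.mono hinfle le_rfl
    have hr := rev_mart 𝒜 hanti hle M (Prod.snd ⁻¹' A) (measurable_snd hAm)
      (fun n x => γ x.1 (Λ n) x.2 A) (fun x => π x A)
      (fun n => ?_) (fun n x => ?_) (fun n B hB => hsc (Λ n) A hAm B hB)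
      (hπA A hAm) (fun x => ?_) (hπB A hAm)
    · have hv1 : (fun x => π x A ^ 2) ≤ᵐ[M] fun x => ⨅ n, ∫⁻ ω, γ x.1 (Λ n) ω A ^ 2 ∂(π x) := by
        filter_upwards [hG1] with x hx
        refine le_iInf fun n => ?_
        have := hπp x
        rw [← hx (Λ n) A hA]
        exact sq_lintegral_le _ _ (spec_meas (hγ.spec x.1) (Λ n) hAm)
      have hfin : ∫⁻ x, π x A ^ 2 ∂M ≠ ∞ := by
        refine ((lintegral_mono (g := fun _ => 1) fun x => ?_).trans_lt ?_).ne
        · have := hπp x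
          exact pow_le_one₀ zero_le prob_le_one
        · simp
      have heq := ae_eq_of_ae_le_of_lintegral_le hv1 hfin hum.aemeasurable ?_
      · filter_upwards [heq] with x hx
        exact hx.ge
      · refine le_trans (le_trans (le_iInf fun n => lintegral_mono fun x => iInf_le _ n) (iInf_mono fun n => ?_)) hr
        have := (h n).2 Set.univ MeasurableSet.univ
        simp only [Measure.restrict_univ] at this
        exact this.le
    · intro s hs
      refine (secSigma_iff _ _).2 ⟨hγ.jointMeas (Λ n) A hAm hs, fun ξ => ?_⟩
      exact (hγ.spec ξ).meas (Λ n) A hAm hs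
    · have := (hγ.spec x.1).prob (Λ n) x.2
      exact prob_le_one
    · have := hπp x
      exact prob_le_one
  have hgood : ∀ᵐ x ∂M, π x ∈ goodSet (γ x.1) C Λ := by
    filter_upwards [hG1, hG2] with x h1 h2
    exact ⟨(hπp x).measure_univ, h1, h2⟩
  have hπξ : ∀ ξ, Measurable fun ω => π (ξ, ω) := fun ξ => hπm'.comp measurable_prodMk_left
  have hκm : Measurable fun ξ => (μ ξ).map fun ω => π (ξ, ω) := by
    refine Measure.measurable_of_measurable_coe _ fun s hs => ?_
    have : ∀ ξ, ((μ ξ).map fun ω => π (ξ, ω)) s = μ ξ (Prod.mk ξ ⁻¹' (π ⁻¹' s)) := fun ξ => by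
      rw [Measure.map_apply (hπξ ξ) hs]; rfl
    simp only [this]
    exact ProbabilityTheory.Kernel.measurable_kernel_prodMk_left (hπm' hs)
  refine ⟨fun ξ => (μ ξ).map fun ω => π (ξ, ω), hκm,
    fun ξ => Measure.isProbabilityMeasure_map (hπξ ξ).aemeasurable, ?_, ?_⟩
  · have hC' : ∀ᵐ ξ ∂ℙ, ∀ A ∈ C, ∫⁻ ω, π (ξ, ω) A ∂(μ ξ) = μ ξ A := by
      refine (ae_ball_iff hCc).2 fun A hA => ?_
      have hAm := hCm A hA
      have hmA : Measurable fun x => π x A := (hπA A hAm).mono hinfle le_rfl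
      refine ae_eq_of_forall_setLIntegral_eq_of_sigmaFinite
        (Measurable.lintegral_kernel_prod_right' hmA) (μ.measurable_coe hAm) fun s hs _ => ?_
      have h := hπB A hAm (Prod.fst ⁻¹' s) (hfst hs)
      have e1 : (Prod.fst ⁻¹' s : Set (H × (S → E))) = s ×ˢ Set.univ := by ext; simp
      have e2 : (Prod.snd ⁻¹' A ∩ Prod.fst ⁻¹' s : Set (H × (S → E))) = s ×ˢ A := by
        ext; simp [and_comm]
      rw [e2, e1, Measure.setLIntegral_compProd hmA hs MeasurableSet.univ,
        Measure.compProd_apply_prod hs hAm] at h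
      simpa using h
    filter_upwards [hC'] with ξ hξ
    have e : μ ξ = (μ ξ).bind fun ω => π (ξ, ω) := by
      refine ext_of_generate_finite C hgen hCpi (fun A hA => ?_) ?_
      · rw [Measure.bind_apply (hCm A hA) (hπξ ξ).aemeasurable, hξ A hA]
      · rw [Measure.bind_apply MeasurableSet.univ (hπξ ξ).aemeasurable]
        simp [(hπp _).measure_univ]
    intro A hA
    rw [lintegral_map (Measure.measurable_coe hA) (hπξ ξ)]
    conv_rhs => rw [e]
    rw [Measure.bind_apply hA (hπξ ξ).aemeasurable]
  · filter_upwards [Measure.ae_ae_of_ae_compProd hgood] with ξ hξ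
    have hm := measurableSet_goodSet (hγ.spec ξ) C hCc hCm Λ
    refine ⟨(goodSet (γ ξ) C Λ)ᶜ, hm.compl, ?_,
      Set.compl_subset_compl.2 (goodSet_subset (hγ.spec ξ) C hCpi hgen Λ)⟩
    rw [Measure.map_apply (hπξ ξ) hm.compl]
    exact hξ

theorem decomposition_metastate
    [Countable S] [MeasurableSpace E] [StandardBorelSpace E] [MeasurableSpace H]
    (ℙ : Measure H) [IsProbabilityMeasure ℙ]
    (γ : H → Finset S → (S → E) → Measure (S → E))
    (hγ : IsRandomSpecification γ)
    (hGnonempty : ∀ᵐ ξ ∂ℙ, (Gibbs (γ ξ)).Nonempty)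
    (κ : H → Measure (Measure (S → E)))
    (hκ : IsMetastate ℙ γ κ) :
    ∃ κex : H → Measure (Measure (S → E)),
      IsMetastate ℙ γ κex ∧
      -- (1) same barycenter as `κ`
      (∀ᵐ ξ ∂ℙ, ∀ A : Set (S → E), MeasurableSet A →
        ∫⁻ ν, ν A ∂(κex ξ) = ∫⁻ ν, ν A ∂(κ ξ)) ∧
      -- (2) supported on the extremal Gibbs measures
      (∀ᵐ ξ ∂ℙ, ∃ N : Set (Measure (S → E)), MeasurableSet N ∧ κex ξ N = 0 ∧
        (exGibbs (γ ξ))ᶜ ⊆ N) := by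
  classical
  obtain ⟨hκm, hκp, hκG⟩ := hκ
  have hne : Nonempty (S → E) := by
    obtain ⟨ξ, ν, hν, -⟩ := hGnonempty.exists
    exact nonempty_of_isProbabilityMeasure ν
  obtain ⟨ω₀⟩ := id hne
  have hjm : Measurable fun ξ => (κ ξ).join := Measure.measurable_join.comp hκm
  let s : Set H := {ξ | (κ ξ).join Set.univ = 1}
  have hs : MeasurableSet s :=
    measurableSet_eq_fun ((Measure.measurable_coe MeasurableSet.univ).comp hjm) measurable_const
  let μ : ProbabilityTheory.Kernel H (S → E) :=
    ⟨fun ξ => if ξ ∈ s then (κ ξ).join else Measure.dirac ω₀,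
      Measurable.ite hs hjm measurable_const⟩
  have hμ1 : ∀ ξ ∈ s, μ ξ = (κ ξ).join := fun ξ h => if_pos h
  have hμ2 : ∀ ξ, ξ ∉ s → μ ξ = Measure.dirac ω₀ := fun ξ h => if_neg h
  have hMk : ProbabilityTheory.IsMarkovKernel μ := by
    refine ⟨fun ξ => ?_⟩
    by_cases h : ξ ∈ s
    · rw [hμ1 ξ h]; exact ⟨h⟩
    · rw [hμ2 ξ h]; infer_instance
  have hae : ∀ᵐ ξ ∂ℙ, ξ ∈ s ∧ μ ξ ∈ Gibbs (γ ξ) := by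
    filter_upwards [hκG] with ξ ⟨N, hN, hN0, hsub⟩
    have hG : ∀ᵐ ν ∂(κ ξ), ν ∈ Gibbs (γ ξ) := measure_mono_null hsub hN0
    have := hκp ξ
    have h1 : ξ ∈ s := by
      change (κ ξ).join Set.univ = 1
      rw [Measure.join_apply MeasurableSet.univ]
      have : ∀ᵐ ν ∂(κ ξ), ν Set.univ = 1 := by
        filter_upwards [hG] with ν hν using hν.1.measure_univ
      rw [lintegral_congr_ae this]
      simp
    refine ⟨h1, hMk.isProbabilityMeasure ξ, fun Λ A hA => ?_⟩
    rw [hμ1 ξ h1, Measure.lintegral_join (spec_meas (hγ.spec ξ) Λ hA).aemeasurable, Measure.join_apply hA]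
    refine lintegral_congr_ae ?_
    filter_upwards [hG] with ν hν using hν.2 Λ A hA
  obtain ⟨κex, h1, h2, h3, h4⟩ := core ℙ γ hγ μ (hae.mono fun ξ h => h.2)
  refine ⟨κex, ⟨h1, h2, ?_⟩, ?_, h4⟩
  · filter_upwards [h4] with ξ ⟨N, hN, hN0, hsub⟩
    exact ⟨N, hN, hN0, (Set.compl_subset_compl.2 fun ν hν => hν.1).trans hsub⟩
  · filter_upwards [h3, hae] with ξ hξ hs' A hA
    rw [hξ A hA, hμ1 ξ hs'.1, Measure.join_apply hA]

end GibbsMeta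
end

section
/- Let (H,ℋ) and (Ω,ℱ) be measurable spaces and let π : H × Ω × ℱ → [0,1] be such that A ↦ π[ξ](A|ω) is a probability measure on (Ω,ℱ) for every (ξ,ω) ∈ H × Ω and (ξ,ω) ↦ π[ξ](A|ω) is (ℋ⊗ℱ)-measurable for every A ∈ ℱ. For ξ ∈ H and μ ∈ 𝒫(Ω), let w[ξ]_μ ∈ 𝒫(𝒫(Ω)) be the image (pushforward) of μ under ω ↦ π[ξ](·|ω), i.e. w[ξ]_μ(M) = μ({ω : π[ξ](·|ω) ∈ M}) for M ∈ e(𝒫(Ω)). Then the map (ξ,μ) ↦ w[ξ]_μ is measurable from (H × 𝒫(Ω), ℋ ⊗ e(𝒫(Ω))) to (𝒫(𝒫(Ω)), e(𝒫(𝒫(Ω)))). -/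
open MeasureTheory Filter Topology
open scoped ENNReal NNReal

namespace GibbsMeta

/-- The evaluation σ-algebra on the space `𝒫(Ω)` of probability measures, induced by
the evaluation σ-algebra on `Measure Ω`. -/
instance {Ω : Type*} [MeasurableSpace Ω] : MeasurableSpace (ProbabilityMeasure Ω) :=
  inferInstanceAs (MeasurableSpace {μ : Measure Ω // IsProbabilityMeasure μ})

/-- **Measurability of the decomposition map.** Let `π` be a probability kernel on
`H × Ω`, jointly measurable in `(ξ, ω)`, and let `w[ξ]_μ ∈ 𝒫(𝒫(Ω))` be the image of
`μ` under `ω ↦ π[ξ](·|ω)`, i.e. `w[ξ]_μ(M) = μ({ω : π[ξ](·|ω) ∈ M})`. Then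
`(ξ, μ) ↦ w[ξ]_μ` is `ℋ ⊗ e(𝒫(Ω)) – e(𝒫(𝒫(Ω)))` measurable. -/
theorem measurable_decomposition_map
    {H Ω : Type*} [MeasurableSpace H] [MeasurableSpace Ω]
    (π : H → Ω → Measure Ω)
    (hπprob : ∀ ξ ω, IsProbabilityMeasure (π ξ ω))
    (hπmeas : ∀ A : Set Ω, MeasurableSet A →
      Measurable fun p : H × Ω => π p.1 p.2 A)
    (w : H → Measure Ω → Measure (Measure Ω))
    (hw : ∀ ξ (μ : Measure Ω), ∀ M : Set (Measure Ω), MeasurableSet M →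
      w ξ μ M = μ {ω | π ξ ω ∈ M}) :
    Measurable fun p : H × ProbabilityMeasure Ω => w p.1 (p.2 : Measure Ω) := by
  have hval : Measurable fun p : H × ProbabilityMeasure Ω => (p.2 : Measure Ω) :=
    (measurable_subtype_coe (p := fun μ : Measure Ω => IsProbabilityMeasure μ)).comp
      measurable_snd
  let κ : ProbabilityTheory.Kernel (H × ProbabilityMeasure Ω) Ω :=
    ⟨fun p => (p.2 : Measure Ω), hval⟩
  have hκ : ProbabilityTheory.IsMarkovKernel κ :=
    ⟨fun p => inferInstanceAs (IsProbabilityMeasure (p.2 : Measure Ω))⟩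
  have hπ : Measurable fun p : H × Ω => π p.1 p.2 :=
    Measure.measurable_of_measurable_coe _ hπmeas
  refine Measure.measurable_of_measurable_coe _ fun M hM => ?_
  have hg : Measurable fun q : (H × ProbabilityMeasure Ω) × Ω => π q.1.1 q.2 :=
    hπ.comp ((measurable_fst.comp measurable_fst).prodMk measurable_snd)
  have key := ProbabilityTheory.Kernel.measurable_kernel_prodMk_left (κ := κ) (hg hM)
  have heq : (fun p : H × ProbabilityMeasure Ω => w p.1 (p.2 : Measure Ω) M) =
      fun p => (p.2 : Measure Ω) {ω | π p.1 ω ∈ M} := by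
    funext p
    exact hw _ _ M hM
  rw [heq]
  exact key

end GibbsMeta
end
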